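/- arXiv:2505.11469 — 4 statements merged into one kernel-verified Lean document; each statement's English description precedes it below -/
import Mathlib

section
/- For every integer ℓ ≥ 2, as t → 0⁺ the following four asymptotic equivalences hold (each meaning the ratio of the two sides tends to 1): Z_{ℓ−1}^{[ℓ]}(t) ~ (K_ℓ/(ℓ−1)) · t^{−ℓ+1}, Z_ℓ^{[ℓ]}(t) ~ K_ℓ · t^{−ℓ}, Z_{ℓ+1}^{[ℓ]}(t) ~ ℓ·K_ℓ · t^{−ℓ−1}, and Z_{ℓ+2}^{[ℓ]}(t) ~ ℓ(ℓ+1)·K_ℓ · t^{−ℓ−2}. -/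
open Filter Topology Real MeasureTheory Asymptotics

noncomputable section

/-- Number of joint orbits of the subgroup generated by a tuple of permutations. -/
def kappa {ℓ n : ℕ} (σ : Fin ℓ → Equiv.Perm (Fin n)) : ℕ :=
  Nat.card (MulAction.orbitRel.Quotient (Subgroup.closure (Set.range σ)) (Fin n))

/-- `Acount ℓ n k` is the number of commuting `ℓ`-tuples of permutations of `{1,…,n}`
with exactly `k` joint orbits. -/
def Acount (ℓ n k : ℕ) : ℕ :=
  Nat.card {σ : Fin ℓ → Equiv.Perm (Fin n) //
    (∀ i j, σ i * σ j = σ j * σ i) ∧ kappa σ = k}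

/-- `Hpoly ℓ n x = (1/n!) ∑_k A(ℓ,n,k) x^k`. -/
def Hpoly (ℓ n : ℕ) (x : ℝ) : ℝ :=
  (1 / (n.factorial : ℝ)) * ∑ k ∈ Finset.range (n + 1), (Acount ℓ n k : ℝ) * x ^ k

/-- Expectation, under the Ewens-like measure `P_{ℓ,n,x}`, of `g(K_{ℓ,n})`. -/
def expectK (ℓ n : ℕ) (x : ℝ) (g : ℕ → ℝ) : ℝ :=
  (∑ k ∈ Finset.range (n + 1), g k * (Acount ℓ n k : ℝ) * x ^ k) /
    (∑ k ∈ Finset.range (n + 1), (Acount ℓ n k : ℝ) * x ^ k)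

/-- Mean of `K_{ℓ,n}` under `P_{ℓ,n,x}`. -/
def meanK (ℓ n : ℕ) (x : ℝ) : ℝ := expectK ℓ n x (fun k => (k : ℝ))

/-- Variance of `K_{ℓ,n}` under `P_{ℓ,n,x}`. -/
def varK (ℓ n : ℕ) (x : ℝ) : ℝ :=
  expectK ℓ n x (fun k => ((k : ℝ) - meanK ℓ n x) ^ 2)

/-- Real Riemann zeta values (as a series), `zetaR s = ∑_{m ≥ 1} m^{-s}`. -/
def zetaR (s : ℝ) : ℝ := ∑' m : ℕ, 1 / ((m : ℝ) + 1) ^ s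

/-- The constant `K_ℓ = (ℓ-1)! ζ(2)⋯ζ(ℓ)`. -/
def Kconst (ℓ : ℕ) : ℝ := ((ℓ - 1).factorial : ℝ) * ∏ j ∈ Finset.Icc 2 ℓ, zetaR (j : ℝ)

/-- The multiple series `Z^{[ℓ]}_{α_1,…,α_ℓ}(t)` with complex exponents. -/
def Zc (ℓ : ℕ) (α : Fin ℓ → ℂ) (t : ℝ) : ℂ :=
  ∑' δ : Fin ℓ → ℕ+,
    (∏ i, ((δ i : ℕ) : ℂ) ^ (α i - 1)) *
      Complex.exp (-(((∏ i, ((δ i : ℕ) : ℝ)) * t : ℝ) : ℂ))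

/-- The multiple series `Z^{[ℓ]}_{α_1,…,α_ℓ}(t)` with real exponents. -/
def Zr (ℓ : ℕ) (α : Fin ℓ → ℝ) (t : ℝ) : ℝ :=
  ∑' δ : Fin ℓ → ℕ+,
    (∏ i, ((δ i : ℕ) : ℝ) ^ (α i - 1)) *
      Real.exp (-(∏ i, ((δ i : ℕ) : ℝ)) * t)

/-- The staircase series `Z_m^{[ℓ]}(t) = Z^{[ℓ]}_{m,m-1,…,m-ℓ+1}(t)`. -/
def Zstair (ℓ : ℕ) (m : ℤ) (t : ℝ) : ℝ :=
  Zr ℓ (fun i => (m : ℝ) - (i : ℕ)) t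

/-- The inverse function `(Z_ℓ^{[ℓ]})^{-1} : (0,∞) → (0,∞)`. -/
def ZstairInv (ℓ : ℕ) (u : ℝ) : ℝ :=
  Function.invFunOn (Zstair ℓ ℓ) (Set.Ioi 0) u

/-- The function `q_{ℓ,n}(y,u,θ)` from the saddle point analysis. -/
def qfun (ℓ n : ℕ) (y u θ : ℝ) : ℂ :=
  Complex.I * (n : ℂ) * (θ : ℂ) - (y : ℂ) * ∑' δ : Fin ℓ → ℕ+,
    (∏ i, ((δ i : ℕ) : ℂ) ^ ((ℓ : ℤ) - 2 - (i : ℕ))) *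
      Complex.exp (-(((∏ i, ((δ i : ℕ) : ℝ)) * u : ℝ) : ℂ)) *
      (Complex.exp (Complex.I * (((∏ i, ((δ i : ℕ) : ℝ)) * θ : ℝ) : ℂ)) - 1)

/-- The normalizing sequence `b_n = ((x K_ℓ)^{1/(2ℓ)}/√(ℓ(ℓ-1))) n^{(ℓ-1)/(2ℓ)}`. -/
def bseq (ℓ : ℕ) (x : ℝ) (n : ℕ) : ℝ :=
  (x * Kconst ℓ) ^ ((1 : ℝ) / (2 * (ℓ : ℝ))) / Real.sqrt ((ℓ : ℝ) * ((ℓ : ℝ) - 1)) *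
    (n : ℝ) ^ (((ℓ : ℝ) - 1) / (2 * (ℓ : ℝ)))

/-- The sequence `x_n = x e^{s/b_n}`. -/
def xseq (ℓ : ℕ) (x s : ℝ) (n : ℕ) : ℝ := x * Real.exp (s / bseq ℓ x n)

/-- The saddle point sequence `t_n = (Z_ℓ^{[ℓ]})^{-1}(n/x)`. -/
def tseq (ℓ : ℕ) (x : ℝ) (n : ℕ) : ℝ := ZstairInv ℓ ((n : ℝ) / x)

end

/-!
Summing first over `δ₁` turns `t ^ α₁ * Z(t)` into a sum over `δ₂, …, δ_ℓ`, with weights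
`∏ δᵢ ^ (-(α₁ - αᵢ + 1))`, of the Riemann sums of mesh `δ₂ ⋯ δ_ℓ t` of Euler's integral for
`Γ(α₁)`. The Euler integrand lies below an antitone integrable function, so these Riemann sums are
bounded uniformly in the mesh and tend to `Γ(α₁)` as the mesh tends to `0`. If `αᵢ < α₁` for all
`i ≥ 2` the weights are summable, with sum `∏ ζ(α₁ - αᵢ + 1)`, and dominated convergence gives
`Z(t) ~ Γ(α₁) ∏ ζ(α₁ - αᵢ + 1) t ^ (-α₁)`. For the staircase `α₁ - αᵢ + 1 = i`.
-/

section RiemannSum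

variable {E : Type*} [NormedAddCommGroup E] {f : ℝ → E} {h : ℝ → ℝ}

theorem norm_comp_natCeil_mul_le (hfh : ∀ x > 0, ‖f x‖ ≤ h x) (hanti : AntitoneOn h (Set.Ioi 0))
    {s x : ℝ} (hs : 0 < s) (hx : 0 < x) : ‖f (⌈x / s⌉₊ * s)‖ ≤ h x := by
  have hle : x ≤ ⌈x / s⌉₊ * s := (div_le_iff₀ hs).1 (Nat.le_ceil _)
  exact (hfh _ (hx.trans_le hle)).trans (hanti hx (hx.trans_le hle) hle)

theorem aestronglyMeasurable_comp_natCeil_mul (f : ℝ → E) (s : ℝ) (μ : Measure ℝ) :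
    AEStronglyMeasurable (fun x => f (⌈x / s⌉₊ * s)) μ :=
  ((StronglyMeasurable.of_discrete (f := fun d : ℕ => f (d * s))).comp_measurable
    (Nat.measurable_ceil.comp (measurable_id.div_const s))).aestronglyMeasurable

theorem integrableOn_comp_natCeil_mul (hfh : ∀ x > 0, ‖f x‖ ≤ h x)
    (hanti : AntitoneOn h (Set.Ioi 0)) (hint : IntegrableOn h (Set.Ioi 0)) {s : ℝ} (hs : 0 < s) :
    IntegrableOn (fun x => f (⌈x / s⌉₊ * s)) (Set.Ioi 0) :=
  hint.mono' (aestronglyMeasurable_comp_natCeil_mul f s _) <|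
    (ae_restrict_mem measurableSet_Ioi).mono fun _ hx => norm_comp_natCeil_mul_le hfh hanti hs hx

theorem tendsto_natCeil_div_mul {x : ℝ} (hx : 0 < x) :
    Tendsto (fun s : ℝ => ⌈x / s⌉₊ * s) (𝓝[>] 0) (𝓝 x) := by
  have hdiv : Tendsto (fun s : ℝ => x / s) (𝓝[>] 0) atTop :=
    tendsto_inv_nhdsGT_zero.const_mul_atTop hx
  have hlim := ((tendsto_nat_ceil_div_atTop (R := ℝ)).comp hdiv).mul_const x
  rw [one_mul] at hlim
  refine hlim.congr' ?_
  filter_upwards [self_mem_nhdsWithin] with s hs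
  have : s ≠ 0 := ne_of_gt hs
  simp only [Function.comp_apply]
  field_simp

variable [NormedSpace ℝ E]

/-- The right-endpoint Riemann sum with mesh `s` of `f` over `(0, ∞)`, with the
value `0` when it is not summable. -/
noncomputable def riemannSum (f : ℝ → E) (s : ℝ) : E := ∑' d : ℕ+, s • f (d * s)

theorem iUnion_Ioc_pnat_sub_one : ⋃ d : ℕ+, Set.Ioc ((d : ℝ) - 1) d = Set.Ioi 0 := by
  ext x
  simp only [Set.mem_iUnion, Set.mem_Ioc, Set.mem_Ioi]
  constructor
  · rintro ⟨d, hd, -⟩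
    have : (1 : ℝ) ≤ d := by exact_mod_cast d.pos
    linarith
  · intro hx
    exact ⟨⟨⌈x⌉₊, Nat.ceil_pos.2 hx⟩, sub_lt_iff_lt_add.2 (Nat.ceil_lt_add_one hx.le),
      Nat.le_ceil x⟩

theorem natCeil_eq_of_mem_Ioc_sub_one {d : ℕ+} {x : ℝ} (hx : x ∈ Set.Ioc ((d : ℝ) - 1) d) :
    ⌈x⌉₊ = d := by
  rw [Nat.ceil_eq_iff d.ne_zero, Nat.cast_pred d.pos]
  exact hx

variable [CompleteSpace E]

theorem hasSum_setIntegral_comp_natCeil {g : ℕ → E}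
    (hg : IntegrableOn (fun x : ℝ => g ⌈x⌉₊) (Set.Ioi 0)) :
    HasSum (fun d : ℕ+ => g d) (∫ x in Set.Ioi (0 : ℝ), g ⌈x⌉₊) := by
  have disjoint_Ioc : Pairwise (Function.onFun Disjoint fun d : ℕ+ => Set.Ioc ((d : ℝ) - 1) d) :=
    fun d e hde => Set.disjoint_left.2 fun x hd he => hde <| PNat.coe_injective <|
      (natCeil_eq_of_mem_Ioc_sub_one hd).symm.trans (natCeil_eq_of_mem_Ioc_sub_one he)
  have integral_Ioc (d : ℕ+) : ∫ x in Set.Ioc ((d : ℝ) - 1) d, g ⌈x⌉₊ = g d := by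
    rw [setIntegral_congr_fun (g := fun _ => g d) measurableSet_Ioc
      fun x hx => congrArg g (natCeil_eq_of_mem_Ioc_sub_one hx)]
    simp
  rw [← iUnion_Ioc_pnat_sub_one] at hg ⊢
  simpa only [integral_Ioc] using
    hasSum_integral_iUnion (fun _ => measurableSet_Ioc) disjoint_Ioc hg

theorem hasSum_riemannSum {s : ℝ} (hs : 0 < s)
    (hf : IntegrableOn (fun x => f (⌈x / s⌉₊ * s)) (Set.Ioi 0)) :
    HasSum (fun d : ℕ+ => s • f (d * s)) (∫ x in Set.Ioi 0, f (⌈x / s⌉₊ * s)) := by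
  have rescale (x : ℝ) : f (⌈x * s / s⌉₊ * s) = f (⌈x⌉₊ * s) := by
    rw [mul_div_cancel_right₀ _ hs.ne']
  have hf' := (integrableOn_Ioi_comp_mul_right_iff _ 0 hs).2 (by rwa [zero_mul])
  have integral_eq := integral_comp_mul_right_Ioi (fun x => f (⌈x / s⌉₊ * s)) 0 hs
  simp only [rescale, zero_mul] at hf' integral_eq
  have hsum := (hasSum_setIntegral_comp_natCeil (g := fun d => f (d * s)) hf').const_smul s
  rwa [integral_eq, smul_inv_smul₀ hs.ne'] at hsum

theorem summable_riemannSum (hfh : ∀ x > 0, ‖f x‖ ≤ h x) (hanti : AntitoneOn h (Set.Ioi 0))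
    (hint : IntegrableOn h (Set.Ioi 0)) {s : ℝ} (hs : 0 < s) :
    Summable fun d : ℕ+ => s • f (d * s) :=
  (hasSum_riemannSum hs (integrableOn_comp_natCeil_mul hfh hanti hint hs)).summable

theorem riemannSum_eq_integral (hfh : ∀ x > 0, ‖f x‖ ≤ h x) (hanti : AntitoneOn h (Set.Ioi 0))
    (hint : IntegrableOn h (Set.Ioi 0)) {s : ℝ} (hs : 0 < s) :
    riemannSum f s = ∫ x in Set.Ioi 0, f (⌈x / s⌉₊ * s) :=
  (hasSum_riemannSum hs (integrableOn_comp_natCeil_mul hfh hanti hint hs)).tsum_eq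

theorem norm_riemannSum_le (hfh : ∀ x > 0, ‖f x‖ ≤ h x) (hanti : AntitoneOn h (Set.Ioi 0))
    (hint : IntegrableOn h (Set.Ioi 0)) {s : ℝ} (hs : 0 < s) :
    ‖riemannSum f s‖ ≤ ∫ x in Set.Ioi 0, h x := by
  rw [riemannSum_eq_integral hfh hanti hint hs]
  exact norm_integral_le_of_norm_le hint <|
    (ae_restrict_mem measurableSet_Ioi).mono fun _ hx => norm_comp_natCeil_mul_le hfh hanti hs hx

theorem tendsto_riemannSum (hcont : ContinuousOn f (Set.Ioi 0)) (hfh : ∀ x > 0, ‖f x‖ ≤ h x)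
    (hanti : AntitoneOn h (Set.Ioi 0)) (hint : IntegrableOn h (Set.Ioi 0)) :
    Tendsto (riemannSum f) (𝓝[>] 0) (𝓝 (∫ x in Set.Ioi 0, f x)) := by
  have hlim : Tendsto (fun s => ∫ x in Set.Ioi 0, f (⌈x / s⌉₊ * s)) (𝓝[>] 0)
      (𝓝 (∫ x in Set.Ioi 0, f x)) := by
    refine tendsto_integral_filter_of_dominated_convergence h
      (.of_forall fun s => aestronglyMeasurable_comp_natCeil_mul f s _) ?_ hint ?_
    · filter_upwards [self_mem_nhdsWithin] with s hs
      filter_upwards [ae_restrict_mem measurableSet_Ioi] with x hx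
        using norm_comp_natCeil_mul_le hfh hanti hs hx
    · filter_upwards [ae_restrict_mem measurableSet_Ioi] with x hx
      exact (hcont.continuousAt (Ioi_mem_nhds hx)).tendsto.comp (tendsto_natCeil_div_mul hx)
  refine hlim.congr' ?_
  filter_upwards [self_mem_nhdsWithin] with s hs
    using (riemannSum_eq_integral hfh hanti hint hs).symm

end RiemannSum

section GammaKernel

variable {a : ℝ}

/-- The integrand of Euler's integral for `Γ(a)`. -/
noncomputable def gammaKernel (a x : ℝ) : ℝ := exp (-x) * x ^ (a - 1)

theorem gammaKernel_nonneg (a : ℝ) {x : ℝ} (hx : 0 ≤ x) : 0 ≤ gammaKernel a x := by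
  unfold gammaKernel
  positivity

theorem continuousOn_gammaKernel (a : ℝ) : ContinuousOn (gammaKernel a) (Set.Ioi 0) :=
  (by fun_prop : Continuous fun x : ℝ => exp (-x)).continuousOn.mul
    (continuousOn_id.rpow_const fun _ hx => .inl (ne_of_gt hx))

theorem rpow_le_mul_exp_half {c x : ℝ} (hc : 0 ≤ c) (hx : 0 ≤ x) :
    x ^ c ≤ (2 * c) ^ c * exp (x / 2) := by
  rcases hc.eq_or_lt with rfl | hc
  · simpa using div_nonneg hx zero_le_two
  calc x ^ c = (2 * c) ^ c * (x / (2 * c)) ^ c := by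
        rw [← mul_rpow (by positivity) (by positivity), mul_div_cancel₀ _ (by positivity)]
    _ ≤ (2 * c) ^ c * exp (x / (2 * c)) ^ c := by
        gcongr
        linarith [add_one_le_exp (x / (2 * c))]
    _ = (2 * c) ^ c * exp (x / 2) := by
        rw [← exp_mul]
        field_simp

/-- An antitone majorant of `gammaKernel a`, of the form `C * x ^ (min a 1 - 1) * exp (-x / 2)`:
half of the exponential absorbs the factor `x ^ (a - min a 1)`. -/
noncomputable def gammaMajorant (a x : ℝ) : ℝ :=
  (2 * (a - min a 1)) ^ (a - min a 1) * (x ^ (min a 1 - 1) * exp (-(1 / 2) * x))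

theorem norm_gammaKernel_le (a : ℝ) : ∀ x > 0, ‖gammaKernel a x‖ ≤ gammaMajorant a x := by
  intro x hx
  have exp_split : exp (-x) = exp (-(1 / 2) * x) * exp (-(x / 2)) := by
    rw [← exp_add]
    ring_nf
  have rpow_split : x ^ (a - 1) = x ^ (min a 1 - 1) * x ^ (a - min a 1) := by
    rw [← rpow_add hx]
    ring_nf
  have hbound : exp (-(x / 2)) * x ^ (a - min a 1) ≤
      (2 * (a - min a 1)) ^ (a - min a 1) := by
    rw [exp_neg, inv_mul_le_iff₀ (exp_pos _), mul_comm]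
    exact rpow_le_mul_exp_half (sub_nonneg.2 (min_le_left a 1)) hx.le
  rw [Real.norm_of_nonneg (gammaKernel_nonneg a hx.le)]
  calc gammaKernel a x = (exp (-(x / 2)) * x ^ (a - min a 1)) *
          (x ^ (min a 1 - 1) * exp (-(1 / 2) * x)) := by
        rw [gammaKernel, exp_split, rpow_split]
        ring
    _ ≤ gammaMajorant a x := by
        unfold gammaMajorant
        gcongr

theorem antitoneOn_gammaMajorant (a : ℝ) : AntitoneOn (gammaMajorant a) (Set.Ioi 0) := by
  intro x hx y hy hxy
  have hx0 : 0 < x := hx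
  have hrpow : y ^ (min a 1 - 1) ≤ x ^ (min a 1 - 1) :=
    antitoneOn_rpow_Ioi_of_exponent_nonpos (sub_nonpos.2 (min_le_right a 1)) hx hy hxy
  have hbase : 0 ≤ a - min a 1 := sub_nonneg.2 (min_le_left a 1)
  have hexp : exp (-(1 / 2) * y) ≤ exp (-(1 / 2) * x) := exp_le_exp.2 (by linarith)
  unfold gammaMajorant
  gcongr

theorem integrableOn_gammaMajorant (ha : 0 < a) : IntegrableOn (gammaMajorant a) (Set.Ioi 0) := by
  have hmin : -1 < min a 1 - 1 := by linarith [lt_min ha one_pos]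
  have hint := integrableOn_rpow_mul_exp_neg_mul_rpow hmin one_pos one_half_pos
  simp only [rpow_one] at hint
  exact hint.const_mul _

theorem summable_riemannSum_gammaKernel (ha : 0 < a) {s : ℝ} (hs : 0 < s) :
    Summable fun d : ℕ+ => s * gammaKernel a (d * s) :=
  summable_riemannSum (norm_gammaKernel_le a) (antitoneOn_gammaMajorant a)
    (integrableOn_gammaMajorant ha) hs

theorem abs_riemannSum_gammaKernel_le (ha : 0 < a) {s : ℝ} (hs : 0 < s) :
    |riemannSum (gammaKernel a) s| ≤ ∫ x in Set.Ioi 0, gammaMajorant a x :=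
  norm_riemannSum_le (norm_gammaKernel_le a) (antitoneOn_gammaMajorant a)
    (integrableOn_gammaMajorant ha) hs

theorem tendsto_riemannSum_gammaKernel (ha : 0 < a) :
    Tendsto (riemannSum (gammaKernel a)) (𝓝[>] 0) (𝓝 (Gamma a)) := by
  rw [Gamma_eq_integral ha]
  exact tendsto_riemannSum (continuousOn_gammaKernel a) (norm_gammaKernel_le a)
    (antitoneOn_gammaMajorant a) (integrableOn_gammaMajorant ha)

end GammaKernel

section Series

theorem hasSum_prod_fin_of_nonneg {n : ℕ} {ι : Fin n → Type*} {f : ∀ i, ι i → ℝ} {a : Fin n → ℝ}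
    (hf : ∀ i x, 0 ≤ f i x) (ha : ∀ i, HasSum (f i) (a i)) :
    HasSum (fun x : ∀ i, ι i => ∏ i, f i (x i)) (∏ i, a i) := by
  induction n with
  | zero => simp
  | succ n ih =>
    have htail := ih (f := fun i => f i.succ) (a := fun i => a i.succ) (fun i => hf i.succ)
      fun i => ha i.succ
    have hsummable := (ha 0).summable.mul_of_nonneg htail.summable (hf 0)
      fun x => Finset.prod_nonneg fun i _ => hf i.succ (x i)
    rw [← (Fin.consEquiv ι).hasSum_iff, Fin.prod_univ_succ]
    refine ((ha 0).mul htail hsummable).congr_fun fun p => ?_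
    simp only [Function.comp_apply, Fin.consEquiv_apply, Fin.prod_univ_succ, Fin.cons_zero,
      Fin.cons_succ]

variable {ι : Type*} {w c : ι → ℝ} {φ : ℝ → ℝ} {C L : ℝ}

theorem norm_mul_comp_mul_le (hc : ∀ i, 0 < c i) (hφ : ∀ s > 0, |φ s| ≤ C) {t : ℝ} (ht : 0 < t)
    (i : ι) : ‖w i * φ (c i * t)‖ ≤ |w i| * C := by
  rw [norm_mul]
  exact mul_le_mul_of_nonneg_left (hφ _ (mul_pos (hc i) ht)) (abs_nonneg _)

theorem summable_mul_comp_mul (hw : Summable w) (hc : ∀ i, 0 < c i) (hφ : ∀ s > 0, |φ s| ≤ C)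
    {t : ℝ} (ht : 0 < t) : Summable fun i => w i * φ (c i * t) :=
  (hw.abs.mul_right C).of_norm_bounded (norm_mul_comp_mul_le hc hφ ht)

theorem tendsto_tsum_mul_comp_mul (hw : Summable w) (hc : ∀ i, 0 < c i)
    (hφ : ∀ s > 0, |φ s| ≤ C) (hlim : Tendsto φ (𝓝[>] 0) (𝓝 L)) :
    Tendsto (fun t => ∑' i, w i * φ (c i * t)) (𝓝[>] 0) (𝓝 ((∑' i, w i) * L)) := by
  rw [← tsum_mul_right]
  refine tendsto_tsum_of_dominated_convergence (hw.abs.mul_right C) (fun i => ?_) ?_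
  · have hscale : Tendsto (fun t => c i * t) (𝓝[>] 0) (𝓝[>] 0) :=
      fun _ hs => eventually_nhdsGT_zero_mul_left (hc i) hs
    exact (hlim.comp hscale).const_mul (w i)
  · filter_upwards [self_mem_nhdsWithin] with t ht using norm_mul_comp_mul_le hc hφ ht

theorem tsum_prod_mul_riemannSum {f : ℝ → ℝ} (hw : ∀ i, 0 ≤ w i) (hc : ∀ i, 0 < c i)
    (hf : ∀ x > 0, 0 ≤ f x)
    (hinner : ∀ i, Summable fun d : ℕ+ => c i * f (d * c i))
    (houter : Summable fun i => w i * riemannSum f (c i)) :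
    ∑' p : ι × ℕ+, w p.1 * (c p.1 * f (p.2 * c p.1)) = ∑' i, w i * riemannSum f (c i) := by
  have hsum (i : ι) : ∑' d : ℕ+, w i * (c i * f (d * c i)) = w i * riemannSum f (c i) :=
    tsum_mul_left
  have hnonneg : 0 ≤ fun p : ι × ℕ+ => w p.1 * (c p.1 * f (p.2 * c p.1)) := fun p =>
    mul_nonneg (hw _) <| mul_nonneg (hc _).le <| hf _ <|
      mul_pos (Nat.cast_pos.2 p.2.pos) (hc _)
  have hsummable : Summable fun p : ι × ℕ+ => w p.1 * (c p.1 * f (p.2 * c p.1)) :=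
    (summable_prod_of_nonneg hnonneg).2
      ⟨fun i => (hinner i).mul_left (w i), houter.congr fun i => (hsum i).symm⟩
  rw [hsummable.tsum_prod]
  exact tsum_congr hsum

theorem hasSum_zetaR {s : ℝ} (hs : 1 < s) : HasSum (fun d : ℕ+ => (d : ℝ) ^ (-s)) (zetaR s) := by
  have hsummable : Summable fun m : ℕ => 1 / ((m : ℝ) + 1) ^ s := by
    simpa using (summable_nat_add_iff 1).2 (summable_one_div_nat_rpow.2 hs)
  rw [← Equiv.pnatEquivNat.symm.hasSum_iff]
  refine hsummable.hasSum.congr_fun fun m => ?_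
  simp [rpow_neg (by positivity : (0 : ℝ) ≤ m + 1)]

theorem zetaR_pos {s : ℝ} (hs : 1 < s) : 0 < zetaR s := by
  rw [← (hasSum_zetaR hs).tsum_eq]
  exact (hasSum_zetaR hs).summable.tsum_pos (fun d => by positivity) 1 (by simp)

end Series

section Zr

variable {n : ℕ} {α : Fin (n + 1) → ℝ}

theorem prod_pnat_pos (δ : Fin n → ℕ+) : 0 < ∏ i, (δ i : ℝ) :=
  Finset.prod_pos fun i _ => Nat.cast_pos.2 (δ i).pos

theorem prod_rpow_mul_prod_rpow (β : Fin n → ℝ) (a : ℝ) (δ : Fin n → ℕ+) :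
    (∏ i, (δ i : ℝ) ^ (-(a - β i + 1))) * (∏ i, (δ i : ℝ)) ^ a = ∏ i, (δ i : ℝ) ^ (β i - 1) := by
  rw [← finsetProd_rpow _ _ fun i _ => by positivity, ← Finset.prod_mul_distrib]
  refine Finset.prod_congr rfl fun i _ => ?_
  rw [← rpow_add (Nat.cast_pos.2 (δ i).pos)]
  ring_nf

theorem mul_gammaKernel_mul {p d t : ℝ} (hp : 0 < p) (hd : 0 < d) (ht : 0 < t) (a : ℝ) :
    p * t * gammaKernel a (d * (p * t)) = p ^ a * (d ^ (a - 1) * exp (-(d * p) * t) * t ^ a) := by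
  rw [gammaKernel, mul_rpow hd.le (by positivity), rpow_sub_one (by positivity) a (x := p * t),
    mul_rpow hp.le ht.le]
  field_simp

theorem Zr_term_cons_mul_rpow (α : Fin (n + 1) → ℝ) {t : ℝ} (ht : 0 < t) (d : ℕ+)
    (δ : Fin n → ℕ+) :
    (∏ i, ((Fin.cons d δ : Fin (n + 1) → ℕ+) i : ℝ) ^ (α i - 1)) *
        exp (-(∏ i, ((Fin.cons d δ : Fin (n + 1) → ℕ+) i : ℝ)) * t) * t ^ α 0 =
      (∏ i, (δ i : ℝ) ^ (-(α 0 - α i.succ + 1))) *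
        ((∏ i, (δ i : ℝ)) * t * gammaKernel (α 0) (d * ((∏ i, (δ i : ℝ)) * t))) := by
  rw [mul_gammaKernel_mul (prod_pnat_pos δ) (Nat.cast_pos.2 d.pos) ht, ← mul_assoc,
    prod_rpow_mul_prod_rpow]
  simp only [Fin.prod_univ_succ, Fin.cons_zero, Fin.cons_succ]
  ring

theorem hasSum_prod_rpow_zetaR {β : Fin n → ℝ} (hβ : ∀ i, 1 < β i) :
    HasSum (fun δ : Fin n → ℕ+ => ∏ i, (δ i : ℝ) ^ (-β i)) (∏ i, zetaR (β i)) :=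
  hasSum_prod_fin_of_nonneg (f := fun i (d : ℕ+) => (d : ℝ) ^ (-β i)) (fun _ _ => by positivity)
    fun i => hasSum_zetaR (hβ i)

theorem Zr_mul_rpow_eq_tsum (h0 : 0 < α 0) (hα : ∀ i : Fin n, α i.succ < α 0) {t : ℝ}
    (ht : 0 < t) :
    Zr (n + 1) α t * t ^ α 0 = ∑' δ : Fin n → ℕ+, (∏ i, (δ i : ℝ) ^ (-(α 0 - α i.succ + 1))) *
      riemannSum (gammaKernel (α 0)) ((∏ i, (δ i : ℝ)) * t) := by
  have hβ (i : Fin n) : 1 < α 0 - α i.succ + 1 := by linarith [hα i]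
  have hpos (δ : Fin n → ℕ+) : 0 < (∏ i, (δ i : ℝ)) * t := mul_pos (prod_pnat_pos δ) ht
  rw [← tsum_prod_mul_riemannSum (fun _ => by positivity) hpos
    (fun _ hx => gammaKernel_nonneg _ (le_of_lt hx))
    (fun δ => summable_riemannSum_gammaKernel h0 (hpos δ))
    (summable_mul_comp_mul (hasSum_prod_rpow_zetaR hβ).summable prod_pnat_pos
      (fun _ => abs_riemannSum_gammaKernel_le h0) ht), Zr, ← tsum_mul_right,
    ← ((Equiv.prodComm _ _).trans (Fin.consEquiv fun _ : Fin (n + 1) => ℕ+)).tsum_eq]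
  exact tsum_congr fun p => Zr_term_cons_mul_rpow α ht p.2 p.1

theorem tendsto_Zr_mul_rpow (h0 : 0 < α 0) (hα : ∀ i : Fin n, α i.succ < α 0) :
    Tendsto (fun t => Zr (n + 1) α t * t ^ α 0) (𝓝[>] 0)
      (𝓝 ((∏ i : Fin n, zetaR (α 0 - α i.succ + 1)) * Gamma (α 0))) := by
  have hβ (i : Fin n) : 1 < α 0 - α i.succ + 1 := by linarith [hα i]
  have hw := hasSum_prod_rpow_zetaR hβ
  rw [← hw.tsum_eq]
  refine (tendsto_tsum_mul_comp_mul hw.summable prod_pnat_pos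
    (fun _ => abs_riemannSum_gammaKernel_le h0) (tendsto_riemannSum_gammaKernel h0)).congr' ?_
  filter_upwards [self_mem_nhdsWithin] with t ht using (Zr_mul_rpow_eq_tsum h0 hα ht).symm

end Zr

section Zstair

theorem Gamma_sub_one_div_Gamma {x : ℝ} (hx : 1 < x) : Gamma (x - 1) / Gamma x = (x - 1)⁻¹ := by
  have hrec : Gamma x = (x - 1) * Gamma (x - 1) := by
    rw [← Gamma_add_one (sub_pos.2 hx).ne', sub_add_cancel]
  rw [hrec, div_mul_cancel_right₀ (Gamma_pos_of_pos (sub_pos.2 hx)).ne']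

theorem Gamma_add_one_div_Gamma {x : ℝ} (hx : 0 < x) : Gamma (x + 1) / Gamma x = x := by
  rw [Gamma_add_one hx.ne', mul_div_cancel_right₀ _ (Gamma_pos_of_pos hx).ne']

theorem Gamma_add_two_div_Gamma {x : ℝ} (hx : 0 < x) : Gamma (x + 2) / Gamma x = x * (x + 1) := by
  rw [← one_add_one_eq_two, ← add_assoc, Gamma_add_one (by positivity), mul_div_assoc,
    Gamma_add_one_div_Gamma hx, mul_comm]

theorem prod_fin_zetaR_eq_prod_Icc (n : ℕ) :
    ∏ i : Fin n, zetaR ((i : ℝ) + 2) = ∏ j ∈ Finset.Icc 2 (n + 1), zetaR (j : ℝ) := by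
  rw [Fin.prod_univ_eq_prod_range (fun i => zetaR ((i : ℝ) + 2)) n,
    ← Finset.Ico_add_one_right_eq_Icc, Finset.prod_Ico_eq_prod_range]
  exact Finset.prod_congr (by simp) fun i _ => by push_cast; rw [add_comm]

theorem Kconst_pos (ℓ : ℕ) : 0 < Kconst ℓ :=
  mul_pos (by positivity) <| Finset.prod_pos fun j hj => zetaR_pos <| by
    exact_mod_cast (Finset.mem_Icc.1 hj).1

theorem Kconst_succ_eq_Gamma_mul (n : ℕ) :
    Kconst (n + 1) = Gamma ((n + 1 : ℕ) : ℝ) * ∏ j ∈ Finset.Icc 2 (n + 1), zetaR (j : ℝ) := by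
  rw [Kconst, Nat.cast_succ, Gamma_nat_eq_factorial, Nat.add_sub_cancel]

theorem tendsto_Zstair_mul_rpow (n : ℕ) {m : ℤ} (hm : 0 < m) :
    Tendsto (fun t => Zstair (n + 1) m t * t ^ (m : ℝ)) (𝓝[>] 0)
      (𝓝 (Gamma m / Gamma ((n + 1 : ℕ) : ℝ) * Kconst (n + 1))) := by
  have hGamma : Gamma ((n + 1 : ℕ) : ℝ) ≠ 0 := (Gamma_pos_of_pos (by positivity)).ne'
  have hlim := tendsto_Zr_mul_rpow (α := fun i : Fin (n + 1) => (m : ℝ) - (i : ℕ))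
    (by simpa using hm) (fun i => by simpa using Nat.cast_add_one_pos (α := ℝ) (i : ℕ))
  have hexp (i : Fin n) : (m : ℝ) - ((m : ℝ) - ((i : ℕ) + 1)) + 1 = (i : ℝ) + 2 := by ring
  simp only [Fin.val_zero, Fin.val_succ, Nat.cast_zero, Nat.cast_succ, sub_zero, hexp,
    prod_fin_zetaR_eq_prod_Icc] at hlim
  rwa [Kconst_succ_eq_Gamma_mul, ← mul_assoc, div_mul_cancel₀ _ hGamma, mul_comm]

theorem Zstair_asymptotics_general {ℓ : ℕ} (hℓ : 0 < ℓ) {m : ℤ} (hm : 0 < m) :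
    Tendsto (fun t => Zstair ℓ m t / (Gamma m / Gamma ℓ * Kconst ℓ * t ^ (-m : ℝ)))
      (𝓝[>] 0) (𝓝 1) := by
  obtain ⟨n, rfl⟩ := Nat.exists_eq_succ_of_ne_zero hℓ.ne'
  have hm' : (0 : ℝ) < m := Int.cast_pos.2 hm
  have hconst : Gamma m / Gamma ((n + 1 : ℕ) : ℝ) * Kconst (n + 1) ≠ 0 :=
    (mul_pos (div_pos (Gamma_pos_of_pos hm') (Gamma_pos_of_pos (by positivity)))
      (Kconst_pos _)).ne'
  have hlim := (tendsto_Zstair_mul_rpow n hm).div_const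
    (Gamma m / Gamma ((n + 1 : ℕ) : ℝ) * Kconst (n + 1))
  rw [div_self hconst] at hlim
  refine hlim.congr' ?_
  filter_upwards [self_mem_nhdsWithin] with t ht
  rw [rpow_neg (le_of_lt ht), ← div_eq_mul_inv, div_div_eq_mul_div]

end Zstair

/-- the four staircase asymptotics as `t → 0⁺`:
`Z_{ℓ-1}^{[ℓ]}(t) ~ (K_ℓ/(ℓ-1)) t^{-ℓ+1}`, `Z_ℓ^{[ℓ]}(t) ~ K_ℓ t^{-ℓ}`,
`Z_{ℓ+1}^{[ℓ]}(t) ~ ℓ K_ℓ t^{-ℓ-1}`, `Z_{ℓ+2}^{[ℓ]}(t) ~ ℓ(ℓ+1) K_ℓ t^{-ℓ-2}`. -/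
theorem Zstair_asymptotics (ℓ : ℕ) (hℓ : 2 ≤ ℓ) :
    Tendsto (fun t : ℝ =>
        Zstair ℓ ((ℓ : ℤ) - 1) t / (Kconst ℓ / ((ℓ : ℝ) - 1) * t ^ (-(ℓ : ℝ) + 1)))
      (nhdsWithin 0 (Set.Ioi 0)) (nhds 1) ∧
    Tendsto (fun t : ℝ =>
        Zstair ℓ (ℓ : ℤ) t / (Kconst ℓ * t ^ (-(ℓ : ℝ))))
      (nhdsWithin 0 (Set.Ioi 0)) (nhds 1) ∧
    Tendsto (fun t : ℝ =>
        Zstair ℓ ((ℓ : ℤ) + 1) t / ((ℓ : ℝ) * Kconst ℓ * t ^ (-(ℓ : ℝ) - 1)))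
      (nhdsWithin 0 (Set.Ioi 0)) (nhds 1) ∧
    Tendsto (fun t : ℝ =>
        Zstair ℓ ((ℓ : ℤ) + 2) t /
          ((ℓ : ℝ) * ((ℓ : ℝ) + 1) * Kconst ℓ * t ^ (-(ℓ : ℝ) - 2)))
      (nhdsWithin 0 (Set.Ioi 0)) (nhds 1) := by
  have one_lt_ℓ : (1 : ℝ) < ℓ := by exact_mod_cast hℓ
  have ℓ_pos : (0 : ℝ) < ℓ := one_pos.trans one_lt_ℓ
  have general {m : ℤ} (hm : 0 < m) := Zstair_asymptotics_general (by omega : 0 < ℓ) hm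
  refine ⟨?_, ?_, ?_, ?_⟩
  · simpa [Gamma_sub_one_div_Gamma one_lt_ℓ, inv_mul_eq_div, neg_add_eq_sub]
      using general (m := ℓ - 1) (by omega)
  · simpa [(Gamma_pos_of_pos ℓ_pos).ne'] using general (m := ℓ) (by omega)
  · simpa [Gamma_add_one_div_Gamma ℓ_pos, -neg_add_rev, neg_add']
      using general (m := ℓ + 1) (by omega)
  · simpa [Gamma_add_two_div_Gamma ℓ_pos, -neg_add_rev, neg_add']
      using general (m := ℓ + 2) (by omega)
end

section
/- Let ℓ ≥ 2 be an integer and let z be a complex number with |z| < 1. Then the series L_ℓ(z) := −Σ_{δ_1,…,δ_{ℓ−1} = 1}^{∞} δ_1^{ℓ−2} δ_2^{ℓ−3} ⋯ δ_{ℓ−2} · Log(1 − z^{δ_1⋯δ_{ℓ−1}}) converges absolutely (where Log is the principal branch of the complex logarithm), and it equals the absolutely convergent series Σ_{δ_1,…,δ_ℓ = 1}^{∞} δ_1^{ℓ−2} δ_2^{ℓ−3} ⋯ δ_{ℓ−2} · δ_ℓ^{−1} · z^{δ_1⋯δ_ℓ}. Moreover, for every x > 0 the infinite product Π_{δ_1,…,δ_{ℓ−1}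 = 1}^{∞} (1 − z^{δ_1⋯δ_{ℓ−1}})^{−x δ_1^{ℓ−2} δ_2^{ℓ−3} ⋯ δ_{ℓ−2}} converges absolutely, in the sense that Σ_{δ_1,…,δ_{ℓ−1}} |(1 − z^{δ_1⋯δ_{ℓ−1}})^{−x δ_1^{ℓ−2}⋯δ_{ℓ−2}} − 1| < ∞, and the product equals exp(x·L_ℓ(z)). -/
open Filter Topology Real MeasureTheory Asymptotics

/-!
Each tuple `δ` of length `ℓ` splits as a tuple of length `ℓ - 1` followed by a last entry `k`, which
carries the exponent `-1`. Summing over `k` first turns the series over `δ` into the Taylor series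
`∑ (z ^ N) ^ k / k = -log (1 - z ^ N)`, where `N` is the product of the remaining entries. The
rearrangement is legitimate because the weight of a tuple with product of entries `P` is at most
`P ^ K` for a fixed `K`, and `P ^ K * ‖z‖ ^ P` is `O(P⁻²)`, which factors over the entries. The
infinite product is then the exponential of an absolutely convergent series.
-/

section Summability

theorem summable_prod_pi {ι : Type*} [Fintype ι] {κ : ι → Type*} {f : ∀ i, κ i → ℝ}
    (hf₀ : ∀ i k, 0 ≤ f i k) (hf : ∀ i, Summable (f i)) :
    Summable fun x : ∀ i, κ i => ∏ i, f i (x i) := by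
  classical
  refine summable_of_sum_le (c := ∏ i, ∑' k, f i k)
    (fun x => Finset.prod_nonneg fun i _ => hf₀ i (x i)) fun s => ?_
  have hs : s ⊆ Fintype.piFinset fun i => s.image fun x => x i := fun x hx =>
    Fintype.mem_piFinset.2 fun i => Finset.mem_image_of_mem _ hx
  calc ∑ x ∈ s, ∏ i, f i (x i)
      ≤ ∑ x ∈ Fintype.piFinset fun i => s.image fun x => x i, ∏ i, f i (x i) :=
        Finset.sum_le_sum_of_subset_of_nonneg hs fun x _ _ =>
          Finset.prod_nonneg fun i _ => hf₀ i (x i)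
    _ = ∏ i, ∑ k ∈ s.image fun x => x i, f i k := (Finset.prod_univ_sum _ _).symm
    _ ≤ ∏ i, ∑' k, f i k :=
        Finset.prod_le_prod (fun i _ => Finset.sum_nonneg fun k _ => hf₀ i k) fun i _ =>
          (hf i).sum_le_tsum _ fun k _ => hf₀ i k

theorem summable_norm_of_hasSum_prod {α β E : Type*} [SeminormedAddCommGroup E]
    {f : α × β → E} {g : α → E} (hf : Summable fun p => ‖f p‖)
    (hg : ∀ a, HasSum (fun b => f (a, b)) (g a)) : Summable fun a => ‖g a‖ :=
  hf.prod.of_nonneg_of_le (fun _ => norm_nonneg _) fun a =>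
    (hg a).norm_le_of_bounded (hf.prod_factor a).hasSum fun _ => le_rfl

end Summability

section Snoc

variable {β E : Type*} {m : ℕ} {F : (Fin (m + 1) → β) → E} {g : (Fin m → β) → E}

/-- Tuples of length `m + 1` as pairs of their first `m` entries and their last entry; this is
`Fin.snocEquiv` with the factors swapped, so that the last entry is the inner variable of
iterated sums. -/
def initLastEquiv (m : ℕ) (β : Type*) : (Fin m → β) × β ≃ (Fin (m + 1) → β) :=
  (Equiv.prodComm _ _).trans (Fin.snocEquiv fun _ => β)

theorem summable_norm_of_hasSum_snoc [SeminormedAddCommGroup E] (hF : Summable fun δ => ‖F δ‖)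
    (hg : ∀ δ, HasSum (fun k => F (Fin.snoc δ k)) (g δ)) : Summable fun δ => ‖g δ‖ :=
  summable_norm_of_hasSum_prod (f := F ∘ initLastEquiv m β)
    ((initLastEquiv m β).summable_iff.2 hF) hg

theorem hasSum_of_hasSum_snoc [AddCommMonoid E] [TopologicalSpace E] [ContinuousAdd E]
    [RegularSpace E] {a : E} (hF : HasSum F a)
    (hg : ∀ δ, HasSum (fun k => F (Fin.snoc δ k)) (g δ)) : HasSum g a :=
  ((initLastEquiv m β).hasSum_iff.2 hF).prod_fiberwise hg

end Snoc

section ComplexPowers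

variable {α : Type*}

theorem summable_norm_exp_sub_one {f : α → ℂ} (hf : Summable fun a => ‖f a‖) :
    Summable fun a => ‖Complex.exp (f a) - 1‖ := by
  refine Summable.of_norm_bounded_eventually (hf.mul_left 2) ?_
  filter_upwards [hf.tendsto_cofinite_zero.eventually_le_const one_pos] with a ha
  rw [norm_norm]
  exact Complex.norm_exp_sub_one_le ha

variable {u w : α → ℂ}

theorem summable_norm_cpow_sub_one (hu : ∀ a, u a ≠ 0)
    (h : Summable fun a => ‖w a * Complex.log (u a)‖) : Summable fun a => ‖u a ^ w a - 1‖ := by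
  simpa only [Complex.cpow_def_of_ne_zero (hu _), mul_comm] using summable_norm_exp_sub_one h

theorem hasProd_cpow_of_hasSum_mul_log {s : ℂ} (hu : ∀ a, u a ≠ 0)
    (h : HasSum (fun a => w a * Complex.log (u a)) s) :
    HasProd (fun a => u a ^ w a) (Complex.exp s) := by
  simpa only [Complex.cpow_def_of_ne_zero (hu _), mul_comm, Function.comp_def] using h.cexp

theorem hasSum_pnat_neg_log_one_sub {z : ℂ} (hz : ‖z‖ < 1) :
    HasSum (fun k : ℕ+ => z ^ (k : ℕ) / (k : ℕ)) (-Complex.log (1 - z)) :=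
  (hasSum_pnat_iff (f := fun n : ℕ => z ^ n / (n : ℂ))).2
    (by simpa using Complex.hasSum_taylorSeries_neg_log hz)

end ComplexPowers

theorem exists_pow_mul_pow_le_mul_sq_inv (K : ℕ) {r : ℝ} (hr₀ : 0 ≤ r) (hr₁ : r < 1) :
    ∃ C : ℝ, ∀ n : ℕ, 0 < n → (n : ℝ) ^ K * r ^ n ≤ C * ((n : ℝ) ^ 2)⁻¹ := by
  obtain ⟨C, hC⟩ := (tendsto_pow_const_mul_const_pow_of_lt_one (K + 2) hr₀ hr₁).bddAbove_range
  refine ⟨C, fun n hn => ?_⟩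
  rw [← div_eq_mul_inv, le_div_iff₀ (by positivity)]
  calc (n : ℝ) ^ K * r ^ n * (n : ℝ) ^ 2 = (n : ℝ) ^ (K + 2) * r ^ n := by ring
    _ ≤ C := hC ⟨n, rfl⟩

section Tuples

variable {ι : Type*} [Fintype ι]

/-- The product `δ₁ ⋯ δ_ℓ` of the entries of a tuple of positive integers. -/
def entryProd (δ : ι → ℕ+) : ℕ := ∏ i, (δ i : ℕ)

/-- The weight `δ₁ ^ e₁ ⋯ δ_ℓ ^ e_ℓ` of a tuple of positive integers, as a complex number. The
Bryan–Fulman weight is the case `eᵢ = ℓ - 1 - i` with entries numbered from `1`. -/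
noncomputable def zpowProd (e : ι → ℤ) (δ : ι → ℕ+) : ℂ := ∏ i, ((δ i : ℕ) : ℂ) ^ e i

theorem entryProd_pos (δ : ι → ℕ+) : 0 < entryProd δ :=
  Finset.prod_pos fun i _ => (δ i).pos

theorem summable_entryProd_sq_inv : Summable fun δ : ι → ℕ+ => ((entryProd δ : ℝ) ^ 2)⁻¹ := by
  have hsq : Summable fun k : ℕ+ => (((k : ℕ) : ℝ) ^ 2)⁻¹ :=
    (Real.summable_nat_pow_inv.2 one_lt_two).comp_injective PNat.coe_injective
  refine (summable_prod_pi (fun _ _ => by positivity) fun _ : ι => hsq).congr fun δ => ?_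
  simp only [entryProd, Nat.cast_prod, ← Finset.prod_pow, Finset.prod_inv_distrib]

theorem norm_zpowProd_le {e : ι → ℤ} {K : ℕ} (he : ∀ i, e i ≤ K) (δ : ι → ℕ+) :
    ‖zpowProd e δ‖ ≤ (entryProd δ : ℝ) ^ K := by
  rw [zpowProd, entryProd, norm_prod, Nat.cast_prod, ← Finset.prod_pow]
  refine Finset.prod_le_prod (fun _ _ => norm_nonneg _) fun i _ => ?_
  rw [norm_zpow, Complex.norm_natCast, ← zpow_natCast]
  exact zpow_le_zpow_right₀ (Nat.one_le_cast.2 (δ i).pos) (he i)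

variable {z : ℂ}

theorem summable_norm_zpowProd_mul_pow (e : ι → ℤ) (hz : ‖z‖ < 1) :
    Summable fun δ : ι → ℕ+ => ‖zpowProd e δ * z ^ entryProd δ‖ := by
  obtain ⟨K, hK⟩ : ∃ K : ℕ, ∀ i, e i ≤ K :=
    ⟨∑ i, (e i).toNat, fun i => (e i).self_le_toNat.trans <| Nat.cast_le.2 <|
      Finset.single_le_sum (f := fun i => (e i).toNat) (fun _ _ => Nat.zero_le _)
        (Finset.mem_univ i)⟩
  obtain ⟨C, hC⟩ := exists_pow_mul_pow_le_mul_sq_inv K (norm_nonneg z) hz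
  refine (summable_entryProd_sq_inv.mul_left C).of_nonneg_of_le (fun _ => norm_nonneg _) fun δ => ?_
  calc ‖zpowProd e δ * z ^ entryProd δ‖
      = ‖zpowProd e δ‖ * ‖z‖ ^ entryProd δ := by rw [norm_mul, norm_pow]
    _ ≤ (entryProd δ : ℝ) ^ K * ‖z‖ ^ entryProd δ := by gcongr; exact norm_zpowProd_le hK δ
    _ ≤ C * ((entryProd δ : ℝ) ^ 2)⁻¹ := hC _ (entryProd_pos δ)

theorem norm_pow_entryProd_lt_one (hz : ‖z‖ < 1) (δ : ι → ℕ+) : ‖z ^ entryProd δ‖ < 1 := by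
  rw [norm_pow]
  exact pow_lt_one₀ (norm_nonneg z) hz (entryProd_pos δ).ne'

theorem one_sub_pow_entryProd_ne_zero (hz : ‖z‖ < 1) (δ : ι → ℕ+) : 1 - z ^ entryProd δ ≠ 0 :=
  (isUnit_one_sub_of_norm_lt_one (norm_pow_entryProd_lt_one hz δ)).ne_zero

end Tuples

section LogSeries

variable {m : ℕ}

theorem entryProd_snoc (δ : Fin m → ℕ+) (k : ℕ+) :
    entryProd (Fin.snoc δ k : Fin (m + 1) → ℕ+) = entryProd δ * k := by
  simp only [entryProd, Fin.prod_univ_castSucc, Fin.snoc_castSucc, Fin.snoc_last]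

theorem zpowProd_snoc (e : Fin (m + 1) → ℤ) (δ : Fin m → ℕ+) (k : ℕ+) :
    zpowProd e (Fin.snoc δ k : Fin (m + 1) → ℕ+) =
      zpowProd (Fin.init e) δ * ((k : ℕ) : ℂ) ^ e (Fin.last m) := by
  simp only [zpowProd, Fin.prod_univ_castSucc, Fin.snoc_castSucc, Fin.snoc_last, Fin.init]

variable {e : Fin (m + 1) → ℤ} {z : ℂ}

theorem hasSum_snoc_zpowProd_mul_pow (he : e (Fin.last m) = -1) (hz : ‖z‖ < 1) (δ : Fin m → ℕ+) :
    HasSum (fun k : ℕ+ => zpowProd e (Fin.snoc δ k : Fin (m + 1) → ℕ+) *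
        z ^ entryProd (Fin.snoc δ k : Fin (m + 1) → ℕ+))
      (-(zpowProd (Fin.init e) δ * Complex.log (1 - z ^ entryProd δ))) := by
  rw [← mul_neg]
  refine ((hasSum_pnat_neg_log_one_sub (norm_pow_entryProd_lt_one hz δ)).mul_left
    (zpowProd (Fin.init e) δ)).congr_fun fun k => ?_
  rw [zpowProd_snoc, entryProd_snoc, he, zpow_neg_one, pow_mul]
  ring

theorem summable_norm_zpowProd_mul_log (he : e (Fin.last m) = -1) (hz : ‖z‖ < 1) :
    Summable fun δ : Fin m → ℕ+ =>
      ‖zpowProd (Fin.init e) δ * Complex.log (1 - z ^ entryProd δ)‖ := by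
  simpa only [norm_neg] using summable_norm_of_hasSum_snoc
    (summable_norm_zpowProd_mul_pow e hz) (hasSum_snoc_zpowProd_mul_pow he hz)

theorem neg_tsum_zpowProd_mul_log (he : e (Fin.last m) = -1) (hz : ‖z‖ < 1) :
    -(∑' δ : Fin m → ℕ+, zpowProd (Fin.init e) δ * Complex.log (1 - z ^ entryProd δ)) =
      ∑' δ : Fin (m + 1) → ℕ+, zpowProd e δ * z ^ entryProd δ := by
  rw [← tsum_neg]
  exact (hasSum_of_hasSum_snoc (summable_norm_zpowProd_mul_pow e hz).of_norm.hasSum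
    (hasSum_snoc_zpowProd_mul_pow he hz)).tsum_eq

end LogSeries

theorem bryan_fulman_product_general {m : ℕ} {e : Fin (m + 1) → ℤ} (he : e (Fin.last m) = -1)
    {z : ℂ} (hz : ‖z‖ < 1) :
    Summable (fun δ : Fin m → ℕ+ =>
      ‖zpowProd (Fin.init e) δ * Complex.log (1 - z ^ entryProd δ)‖) ∧
    Summable (fun δ : Fin (m + 1) → ℕ+ => ‖zpowProd e δ * z ^ entryProd δ‖) ∧
    -(∑' δ : Fin m → ℕ+, zpowProd (Fin.init e) δ * Complex.log (1 - z ^ entryProd δ)) =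
      ∑' δ : Fin (m + 1) → ℕ+, zpowProd e δ * z ^ entryProd δ ∧
    ∀ x : ℂ,
      Summable (fun δ : Fin m → ℕ+ =>
        ‖(1 - z ^ entryProd δ) ^ (-x * zpowProd (Fin.init e) δ) - 1‖) ∧
      HasProd (fun δ : Fin m → ℕ+ => (1 - z ^ entryProd δ) ^ (-x * zpowProd (Fin.init e) δ))
        (Complex.exp (x *
          -(∑' δ : Fin m → ℕ+,
            zpowProd (Fin.init e) δ * Complex.log (1 - z ^ entryProd δ)))) := by
  have hlog := summable_norm_zpowProd_mul_log he hz
  refine ⟨hlog, summable_norm_zpowProd_mul_pow e hz, neg_tsum_zpowProd_mul_log he hz,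
    fun x => ⟨summable_norm_cpow_sub_one (one_sub_pow_entryProd_ne_zero hz) ?_,
      hasProd_cpow_of_hasSum_mul_log (one_sub_pow_entryProd_ne_zero hz) ?_⟩⟩
  · simpa only [mul_assoc, norm_mul] using hlog.mul_left ‖-x‖
  · simpa only [mul_assoc, mul_neg, neg_mul] using hlog.of_norm.hasSum.mul_left (-x)

/-- absolute convergence of the two series for `L_ℓ(z)`, their equality, and
absolute convergence and value of the Bryan–Fulman infinite product. -/
theorem bryan_fulman_product (ℓ : ℕ) (hℓ : 2 ≤ ℓ) (z : ℂ) (hz : ‖z‖ < 1) :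
    Summable (fun δ : Fin (ℓ - 1) → ℕ+ =>
      ‖(∏ i, ((δ i : ℕ) : ℂ) ^ ((ℓ : ℤ) - 2 - (i : ℕ))) *
        Complex.log (1 - z ^ (∏ i, (δ i : ℕ)))‖) ∧
    Summable (fun δ : Fin ℓ → ℕ+ =>
      ‖(∏ i, ((δ i : ℕ) : ℂ) ^ ((ℓ : ℤ) - 2 - (i : ℕ))) * z ^ (∏ i, (δ i : ℕ))‖) ∧
    -(∑' δ : Fin (ℓ - 1) → ℕ+,
        (∏ i, ((δ i : ℕ) : ℂ) ^ ((ℓ : ℤ) - 2 - (i : ℕ))) *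
          Complex.log (1 - z ^ (∏ i, (δ i : ℕ)))) =
      ∑' δ : Fin ℓ → ℕ+,
        (∏ i, ((δ i : ℕ) : ℂ) ^ ((ℓ : ℤ) - 2 - (i : ℕ))) * z ^ (∏ i, (δ i : ℕ)) ∧
    ∀ x : ℝ, 0 < x →
      Summable (fun δ : Fin (ℓ - 1) → ℕ+ =>
        ‖(1 - z ^ (∏ i, (δ i : ℕ))) ^
            (-(x : ℂ) * ∏ i, ((δ i : ℕ) : ℂ) ^ ((ℓ : ℤ) - 2 - (i : ℕ))) - 1‖) ∧
      (∏' δ : Fin (ℓ - 1) → ℕ+,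
          (1 - z ^ (∏ i, (δ i : ℕ))) ^
            (-(x : ℂ) * ∏ i, ((δ i : ℕ) : ℂ) ^ ((ℓ : ℤ) - 2 - (i : ℕ)))) =
        Complex.exp ((x : ℂ) *
          -(∑' δ : Fin (ℓ - 1) → ℕ+,
              (∏ i, ((δ i : ℕ) : ℂ) ^ ((ℓ : ℤ) - 2 - (i : ℕ))) *
                Complex.log (1 - z ^ (∏ i, (δ i : ℕ))))) := by
  obtain ⟨m, rfl⟩ : ∃ m, ℓ = m + 1 := ⟨ℓ - 1, by omega⟩
  obtain ⟨hlog, hpow, heq, hprod⟩ := bryan_fulman_product_general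
    (e := fun i : Fin (m + 1) => ((m + 1 : ℕ) : ℤ) - 2 - (i : ℕ))
    (by push_cast [Fin.val_last]; ring) hz
  exact ⟨hlog, hpow, heq, fun x _ => ⟨(hprod x).1, (hprod x).2.tprod_eq⟩⟩
end

section
/- Let ℓ ≥ 2 and n ≥ 1 be integers, let y, u > 0 be reals, and let θ ∈ (−π, π). Then the real part of q_{ℓ,n}(y,u,θ) equals 2y · Σ_{δ_1,…,δ_ℓ = 1}^{∞} δ_1^{ℓ−2} δ_2^{ℓ−3} ⋯ δ_{ℓ−2} · δ_ℓ^{−1} · e^{−δ_1⋯δ_ℓ u} · sin²(δ_1⋯δ_ℓ θ / 2), and consequently Re q_{ℓ,n}(y,u,θ) ≥ 2y · Σ_{k=1}^{∞} k^{ℓ−2} e^{−ku} sin²(kθ/2). -/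
open Filter Topology Real MeasureTheory Asymptotics

/-!
Each term of the series in `qfun` is a nonnegative weight times `e^{iPθ} - 1`, where
`P = δ₁ ⋯ δ_ℓ`, and `Re (e^{ix} - 1) = -2 sin² (x / 2)`; this gives the formula for the real part
once the weights are known to be summable. They are, because the exponential beats every power of
`P`, so that the weight of `δ` is at most a constant times `P⁻² = ∏ δᵢ⁻²`. The resulting series
has nonnegative terms, and the lower bound keeps only the tuples `(k, 1, …, 1)`.
-/

section Pi

variable {ι : Type*} [Fintype ι]

theorem summable_pi_prod_of_nonneg {κ : ι → Type*} {f : ∀ i, κ i → ℝ}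
    (f_nonneg : ∀ i k, 0 ≤ f i k) (f_summable : ∀ i, Summable (f i)) :
    Summable fun δ : ∀ i, κ i ↦ ∏ i, f i (δ i) := by
  classical
  have prod_nonneg (δ : ∀ i, κ i) : 0 ≤ ∏ i, f i (δ i) :=
    Finset.prod_nonneg fun i _ ↦ f_nonneg i (δ i)
  refine summable_of_sum_le prod_nonneg (c := ∏ i, ∑' k, f i k) fun s ↦ ?_
  have subset_box : s ⊆ Fintype.piFinset fun i ↦ s.image (· i) := fun δ hδ ↦
    Fintype.mem_piFinset.2 fun i ↦ Finset.mem_image_of_mem (· i) hδ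
  calc ∑ δ ∈ s, ∏ i, f i (δ i)
      ≤ ∑ δ ∈ Fintype.piFinset fun i ↦ s.image (· i), ∏ i, f i (δ i) :=
        Finset.sum_le_sum_of_subset_of_nonneg subset_box fun δ _ _ ↦ prod_nonneg δ
    _ = ∏ i, ∑ k ∈ s.image (· i), f i k := (Finset.prod_univ_sum _ _).symm
    _ ≤ ∏ i, ∑' k, f i k :=
        Finset.prod_le_prod (fun i _ ↦ Finset.sum_nonneg fun k _ ↦ f_nonneg i k)
          fun i _ ↦ (f_summable i).sum_le_tsum _ fun k _ ↦ f_nonneg i k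

theorem prod_apply_mulSingle [DecidableEq ι] {M N : Type*} [One M] [CommMonoid N]
    {h : ι → M → N} (h_one : ∀ j, h j 1 = 1) (i : ι) (m : M) :
    ∏ j, h j ((Pi.mulSingle i m : ι → M) j) = h i m := by
  rw [Fintype.prod_eq_single i fun j hj ↦ by rw [Pi.mulSingle_eq_of_ne hj, h_one],
    Pi.mulSingle_eq_same]

end Pi

theorem pow_mul_exp_neg_mul_le {x u : ℝ} (hx : 0 ≤ x) (hu : 0 < u) (k : ℕ) :
    x ^ k * Real.exp (-x * u) ≤ k.factorial / u ^ k := by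
  have pow_le : (x * u) ^ k ≤ k.factorial * Real.exp (x * u) :=
    (div_le_iff₀' (by positivity)).1 (Real.pow_div_factorial_le_exp (x * u) (by positivity) k)
  rw [neg_mul, Real.exp_neg, ← div_eq_mul_inv,
    div_le_div_iff₀ (Real.exp_pos _) (pow_pos hu k), ← mul_pow]
  exact pow_le

section ExpWeight

variable {ι : Type*} [Fintype ι] (a : ι → ℤ) {u : ℝ}

/-- The weight `∏ᵢ δᵢ ^ aᵢ · exp (-u ∏ᵢ δᵢ)` of a tuple `δ` of positive integers. The series in
`qfun ℓ` has the exponents `aᵢ = ℓ - 2 - i`, with `i` counted from `0`. -/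
noncomputable def expWeight (u : ℝ) (δ : ι → ℕ+) : ℝ :=
  (∏ i, ((δ i : ℕ) : ℝ) ^ a i) * Real.exp (-(∏ i, ((δ i : ℕ) : ℝ)) * u)

theorem expWeight_nonneg (u : ℝ) (δ : ι → ℕ+) : 0 ≤ expWeight a u δ :=
  mul_nonneg (Finset.prod_nonneg fun _ _ ↦ by positivity) (Real.exp_pos _).le

theorem prod_zpow_le_prod_pow {a : ι → ℤ} {N : ℕ} (ha : ∀ i, a i ≤ N) (δ : ι → ℕ+) :
    ∏ i, ((δ i : ℕ) : ℝ) ^ a i ≤ (∏ i, ((δ i : ℕ) : ℝ)) ^ N := by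
  rw [← Finset.prod_pow]
  refine Finset.prod_le_prod (fun i _ ↦ by positivity) fun i _ ↦ ?_
  rw [← zpow_natCast]
  exact zpow_le_zpow_right₀ (by exact_mod_cast (δ i).pos) (ha i)

theorem expWeight_le_mul_prod_inv_sq {a : ι → ℤ} {N : ℕ} (ha : ∀ i, a i ≤ N) (hu : 0 < u)
    (δ : ι → ℕ+) :
    expWeight a u δ ≤ (N + 2).factorial / u ^ (N + 2) * ∏ i, (((δ i : ℕ) : ℝ) ^ 2)⁻¹ := by
  rw [Finset.prod_inv_distrib, Finset.prod_pow, expWeight]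
  have prod_zpow_le := prod_zpow_le_prod_pow ha δ
  have prod_pos : 0 < ∏ i, ((δ i : ℕ) : ℝ) :=
    Finset.prod_pos fun i _ ↦ by exact_mod_cast (δ i).pos
  set P : ℝ := ∏ i, ((δ i : ℕ) : ℝ)
  calc (∏ i, ((δ i : ℕ) : ℝ) ^ a i) * Real.exp (-P * u)
      ≤ P ^ N * Real.exp (-P * u) := by gcongr
    _ = P ^ (N + 2) * Real.exp (-P * u) * (P ^ 2)⁻¹ := by rw [pow_add]; field_simp
    _ ≤ (N + 2).factorial / u ^ (N + 2) * (P ^ 2)⁻¹ := by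
        gcongr
        exact pow_mul_exp_neg_mul_le prod_pos.le hu (N + 2)

theorem summable_expWeight (hu : 0 < u) : Summable (expWeight a u) := by
  obtain ⟨N, ha⟩ : ∃ N : ℕ, ∀ i, a i ≤ N :=
    ⟨Finset.univ.sup fun i ↦ (a i).toNat, fun i ↦ Int.toNat_le.1
      (Finset.le_sup (f := fun i ↦ (a i).toNat) (Finset.mem_univ i))⟩
  have summable_inv_sq : Summable fun k : ℕ+ ↦ (((k : ℕ) : ℝ) ^ 2)⁻¹ :=
    (Real.summable_nat_pow_inv.2 one_lt_two).comp_injective PNat.coe_injective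
  exact .of_nonneg_of_le (expWeight_nonneg a u) (expWeight_le_mul_prod_inv_sq ha hu)
    ((summable_pi_prod_of_nonneg (fun _ _ ↦ by positivity) fun _ ↦ summable_inv_sq).mul_left _)

theorem tsum_zpow_mul_exp_neg_mul_le_tsum_expWeight_mul (hu : 0 < u) {g : ℝ → ℝ} {C : ℝ}
    (g_nonneg : ∀ x, 0 ≤ g x) (g_le : ∀ x, g x ≤ C) (i : ι) :
    ∑' k : ℕ+, ((k : ℕ) : ℝ) ^ a i * Real.exp (-((k : ℕ) : ℝ) * u) * g (k : ℕ) ≤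
      ∑' δ : ι → ℕ+, expWeight a u δ * g (∏ j, ((δ j : ℕ) : ℝ)) := by
  classical
  have term_nonneg (δ : ι → ℕ+) : 0 ≤ expWeight a u δ * g (∏ j, ((δ j : ℕ) : ℝ)) :=
    mul_nonneg (expWeight_nonneg a u δ) (g_nonneg _)
  have term_summable : Summable fun δ : ι → ℕ+ ↦ expWeight a u δ * g (∏ j, ((δ j : ℕ) : ℝ)) :=
    .of_nonneg_of_le term_nonneg
      (fun δ ↦ mul_le_mul_of_nonneg_left (g_le _) (expWeight_nonneg a u δ))
      ((summable_expWeight a hu).mul_right C)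
  have prod_mulSingle (k : ℕ+) : ∏ j, (((Pi.mulSingle i k : ι → ℕ+) j : ℕ) : ℝ) = (k : ℕ) :=
    prod_apply_mulSingle (h := fun (_ : ι) (m : ℕ+) ↦ ((m : ℕ) : ℝ)) (by simp) i k
  have prod_zpow_mulSingle (k : ℕ+) :
      ∏ j, (((Pi.mulSingle i k : ι → ℕ+) j : ℕ) : ℝ) ^ a j = ((k : ℕ) : ℝ) ^ a i :=
    prod_apply_mulSingle (h := fun j (m : ℕ+) ↦ ((m : ℕ) : ℝ) ^ a j) (by simp) i k
  have mulSingle_injective := Pi.mulSingle_injective (M := fun _ : ι ↦ ℕ+) i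
  refine le_of_eq_of_le (tsum_congr fun k ↦ ?_)
    (tsum_comp_le_tsum_of_inj term_summable term_nonneg mulSingle_injective)
  rw [Function.comp_apply, expWeight, prod_mulSingle, prod_zpow_mulSingle]

end ExpWeight

theorem re_exp_I_mul_ofReal_sub_one (x : ℝ) :
    (Complex.exp (Complex.I * x) - 1).re = -2 * Real.sin (x / 2) ^ 2 := by
  rw [mul_comm, Complex.sub_re, Complex.exp_ofReal_mul_I_re, Complex.one_re,
    Real.sin_sq_eq_half_sub, mul_div_cancel₀ x two_ne_zero]
  ring

theorem re_tsum_ofReal_mul_exp_I_mul_sub_one {κ : Type*} {w : κ → ℝ} (hw : Summable w)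
    (x : κ → ℝ) :
    (∑' k, (w k : ℂ) * (Complex.exp (Complex.I * x k) - 1)).re =
      -2 * ∑' k, w k * Real.sin (x k / 2) ^ 2 := by
  have norm_exp_sub_one_le (k : κ) : ‖Complex.exp (Complex.I * x k) - 1‖ ≤ 2 :=
    (norm_sub_le _ _).trans_eq <| by
      rw [Complex.norm_exp_I_mul_ofReal, norm_one, one_add_one_eq_two]
  have term_summable :
      Summable fun k ↦ (w k : ℂ) * (Complex.exp (Complex.I * x k) - 1) := by
    refine .of_norm_bounded (hw.norm.mul_right 2) fun k ↦ ?_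
    rw [norm_mul, Complex.norm_real]
    exact mul_le_mul_of_nonneg_left (norm_exp_sub_one_le k) (norm_nonneg _)
  rw [Complex.re_tsum term_summable, ← tsum_mul_left]
  refine tsum_congr fun k ↦ ?_
  rw [Complex.re_ofReal_mul, re_exp_I_mul_ofReal_sub_one, mul_left_comm]

theorem qfun_eq_sub_tsum_expWeight (ℓ n : ℕ) (y u θ : ℝ) :
    qfun ℓ n y u θ = Complex.I * n * θ - y * ∑' δ : Fin ℓ → ℕ+,
      (expWeight (fun i : Fin ℓ ↦ (ℓ : ℤ) - 2 - (i : ℕ)) u δ : ℂ) *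
        (Complex.exp (Complex.I * ((∏ i, ((δ i : ℕ) : ℝ)) * θ : ℝ)) - 1) := by
  simp only [qfun, expWeight, neg_mul, Complex.ofReal_mul, Complex.ofReal_exp, Complex.ofReal_neg,
    Complex.ofReal_prod, Complex.ofReal_zpow, Complex.ofReal_natCast]

theorem qfun_re (ℓ n : ℕ) (y θ : ℝ) {u : ℝ} (hu : 0 < u) :
    (qfun ℓ n y u θ).re = 2 * y * ∑' δ : Fin ℓ → ℕ+,
      expWeight (fun i : Fin ℓ ↦ (ℓ : ℤ) - 2 - (i : ℕ)) u δ *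
        Real.sin ((∏ i, ((δ i : ℕ) : ℝ)) * θ / 2) ^ 2 := by
  have re_linear_term : (Complex.I * n * θ).re = 0 := by simp
  rw [qfun_eq_sub_tsum_expWeight, Complex.sub_re, Complex.re_ofReal_mul, re_linear_term,
    re_tsum_ofReal_mul_exp_I_mul_sub_one (summable_expWeight _ hu)]
  ring

theorem qfun_re_formula_general (ℓ n : ℕ) (hℓ : 1 ≤ ℓ) (y u θ : ℝ) (hy : 0 ≤ y) (hu : 0 < u) :
    (qfun ℓ n y u θ).re =
      2 * y * ∑' δ : Fin ℓ → ℕ+,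
        (∏ i, ((δ i : ℕ) : ℝ) ^ ((ℓ : ℤ) - 2 - (i : ℕ))) *
          Real.exp (-(∏ i, ((δ i : ℕ) : ℝ)) * u) *
          Real.sin ((∏ i, ((δ i : ℕ) : ℝ)) * θ / 2) ^ 2 ∧
    2 * y * ∑' k : ℕ+,
        ((k : ℕ) : ℝ) ^ ((ℓ : ℤ) - 2) * Real.exp (-((k : ℕ) : ℝ) * u) *
          Real.sin (((k : ℕ) : ℝ) * θ / 2) ^ 2 ≤
      (qfun ℓ n y u θ).re := by
  have re_eq := qfun_re ℓ n y θ hu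
  have single_le := tsum_zpow_mul_exp_neg_mul_le_tsum_expWeight_mul
    (fun i : Fin ℓ ↦ (ℓ : ℤ) - 2 - (i : ℕ)) hu (g := fun x ↦ Real.sin (x * θ / 2) ^ 2)
    (fun _ ↦ sq_nonneg _) (fun _ ↦ Real.sin_sq_le_one _) ⟨0, hℓ⟩
  rw [Nat.cast_zero, sub_zero] at single_le
  refine ⟨re_eq, re_eq ▸ ?_⟩
  gcongr

/-- the real part of `q_{ℓ,n}(y,u,θ)` is the explicit nonnegative series, and is
bounded below by the one-dimensional sum `2y ∑_k k^{ℓ-2} e^{-ku} sin²(kθ/2)`. -/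
theorem qfun_re_formula (ℓ n : ℕ) (hℓ : 2 ≤ ℓ) (hn : 1 ≤ n) (y u θ : ℝ)
    (hy : 0 < y) (hu : 0 < u) (hθ : θ ∈ Set.Ioo (-π) π) :
    (qfun ℓ n y u θ).re =
      2 * y * ∑' δ : Fin ℓ → ℕ+,
        (∏ i, ((δ i : ℕ) : ℝ) ^ ((ℓ : ℤ) - 2 - (i : ℕ))) *
          Real.exp (-(∏ i, ((δ i : ℕ) : ℝ)) * u) *
          Real.sin ((∏ i, ((δ i : ℕ) : ℝ)) * θ / 2) ^ 2 ∧
    2 * y * ∑' k : ℕ+,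
        ((k : ℕ) : ℝ) ^ ((ℓ : ℤ) - 2) * Real.exp (-((k : ℕ) : ℝ) * u) *
          Real.sin (((k : ℕ) : ℝ) * θ / 2) ^ 2 ≤
      (qfun ℓ n y u θ).re :=
  qfun_re_formula_general ℓ n (one_le_two.trans hℓ) y u θ hy.le hu
end

section
/- Let ℓ ≥ 2 be an integer, let x > 0 and s ∈ ℝ, let b_n := ((x·K_ℓ)^{1/(2ℓ)}/√(ℓ(ℓ−1))) · n^{(ℓ−1)/(2ℓ)}, x_n := x·e^{s/b_n}, and t_n := (Z_ℓ^{[ℓ]})^{−1}(n/x). Then there exists a constant η > 0 such that for all sufficiently large n (in particular with t_n < π) and all θ with t_n < |θ| < π, Re q_{ℓ,n}(x_n, t_n, θ) ≥ η · n^{1/ℓ}; consequently |(1/2π) ∫_{t_n < |θ| < π} e^{−q_{ℓ,n}(x_n,t_n,θ)} dθ| ≤ exp(−η · n^{1/ℓ}). -/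
open Filter Topology Real MeasureTheory Asymptotics

/-!
`Re q_{ℓ,n}(y, u, θ)` is `y` times a sum of nonnegative terms. Keeping only the tuples
`(a, 1, …, 1)` bounds it below by `y ∑ₐ e^{-au} (1 - cos aθ)`, a difference of two geometric series
whose closed form is at least `1 / (21 u)` for `u ≤ |θ| ≤ π` and `u ≤ 1`. Conversely, the first
exponent `ℓ` of `Z_ℓ^{[ℓ]}` strictly dominates the others, so summing over `δ₁` first yields
`Z_ℓ^{[ℓ]}(t) = O(t^{-ℓ})`; with `Z_ℓ^{[ℓ]}(t_n) = n / x` this makes `1 / t_n` at least a constant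
times `n^{1/ℓ}`.
-/

section ElementaryBounds

lemma rpow_le_rpow_self_mul_exp {p v : ℝ} (hp : 0 ≤ p) (hv : 0 ≤ v) : v ^ p ≤ p ^ p * exp v := by
  rcases hp.eq_or_lt with rfl | hp
  · simpa using one_le_exp hv
  calc v ^ p = (p * (v / p)) ^ p := by rw [mul_div_cancel₀ v hp.ne']
    _ = p ^ p * (v / p) ^ p := mul_rpow hp.le (by positivity)
    _ ≤ p ^ p * exp (v / p) ^ p := by
        gcongr
        linarith [add_one_le_exp (v / p)]
    _ = p ^ p * exp v := by rw [← exp_mul, div_mul_cancel₀ v hp.ne']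

lemma exp_neg_le_rpow_neg {p v : ℝ} (hp : 0 ≤ p) (hv : 0 < v) :
    exp (-v) ≤ p ^ p * v ^ (-p) := by
  rw [exp_neg, rpow_neg hv.le, ← div_eq_mul_inv, inv_eq_one_div,
    div_le_div_iff₀ (exp_pos v) (rpow_pos_of_pos hv p), one_mul]
  exact rpow_le_rpow_self_mul_exp hp hv.le

lemma hasSum_pnat_exp_neg_mul {t : ℝ} (ht : 0 < t) :
    HasSum (fun a : ℕ+ => exp (-a * t)) (exp t - 1)⁻¹ := by
  have hgeom : HasSum (fun n : ℕ => exp (-n * t)) (1 - exp (-t))⁻¹ := by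
    refine (hasSum_geometric_of_lt_one (exp_pos (-t)).le (by simpa using ht)).congr_fun ?_
    intro n
    rw [← exp_nat_mul]
    ring_nf
  have hval : (exp t - 1)⁻¹ + 1 = (1 - exp (-t))⁻¹ := by
    have hexp : 1 < exp t := one_lt_exp_iff.2 ht
    have hne : exp t - 1 ≠ 0 := by linarith
    rw [exp_neg]
    field_simp
    ring
  rw [hasSum_pnat_iff (f := fun n : ℕ => exp (-n * t))]
  simpa [hval] using hgeom

lemma tsum_pnat_rpow_mul_exp_neg_le {p b : ℝ} (hp : 0 ≤ p) (hb : 0 < b) :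
    ∑' a : ℕ+, (a : ℝ) ^ p * exp (-a * b) ≤ p ^ p * (2 / b) ^ (p + 1) := by
  have hgeom := hasSum_pnat_exp_neg_mul (half_pos hb)
  have hterm (a : ℕ+) :
      (a : ℝ) ^ p * exp (-a * b) ≤ p ^ p * (2 / b) ^ p * exp (-a * (b / 2)) :=
    calc (a : ℝ) ^ p * exp (-a * b)
        = (2 / b) ^ p * (a * (b / 2)) ^ p * exp (-a * b) := by
          rw [← mul_rpow (by positivity) (by positivity)]
          field_simp
      _ ≤ (2 / b) ^ p * (p ^ p * exp (a * (b / 2))) * exp (-a * b) := by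
          gcongr
          exact rpow_le_rpow_self_mul_exp hp (by positivity)
      _ = p ^ p * (2 / b) ^ p * (exp (a * (b / 2)) * exp (-a * b)) := by ring
      _ = p ^ p * (2 / b) ^ p * exp (-a * (b / 2)) := by
          rw [← exp_add]
          ring_nf
  calc ∑' a : ℕ+, (a : ℝ) ^ p * exp (-a * b)
      ≤ ∑' a : ℕ+, p ^ p * (2 / b) ^ p * exp (-a * (b / 2)) :=
        (Summable.of_nonneg_of_le (fun a => by positivity) hterm
          (hgeom.summable.mul_left _)).tsum_le_tsum hterm (hgeom.summable.mul_left _)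
    _ = p ^ p * (2 / b) ^ p * (exp (b / 2) - 1)⁻¹ := by rw [tsum_mul_left, hgeom.tsum_eq]
    _ ≤ p ^ p * (2 / b) ^ p * (b / 2)⁻¹ := by
        gcongr
        linarith [add_one_le_exp (b / 2)]
    _ = p ^ p * (2 / b) ^ (p + 1) := by
        rw [rpow_add_one (by positivity), inv_div, mul_assoc]

lemma summable_pi_prod {γ : Type*} {m : ℕ} {f : Fin m → γ → ℝ} (hf : ∀ i, Summable (f i))
    (hf0 : ∀ i c, 0 ≤ f i c) : Summable fun δ : Fin m → γ => ∏ i, f i (δ i) := by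
  induction m with
  | zero => exact Summable.of_finite
  | succ k ih =>
    have hprod := (hf 0).mul_of_nonneg (ih (fun i => hf i.succ) fun i => hf0 i.succ) (hf0 0)
      fun δ => Finset.prod_nonneg fun i _ => hf0 i.succ (δ i)
    rw [← (Fin.consEquiv fun _ : Fin (k + 1) => γ).summable_iff]
    refine hprod.congr fun p => ?_
    simp [Fin.consEquiv, Fin.prod_univ_succ]

lemma summable_pnat_prod_rpow {m : ℕ} {β : Fin m → ℝ} (hβ : ∀ i, β i < -1) :
    Summable fun δ : Fin m → ℕ+ => ∏ i, (δ i : ℝ) ^ β i :=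
  summable_pi_prod (f := fun i (a : ℕ+) => (a : ℝ) ^ β i)
    (fun i => summable_pnat_iff_summable_nat.2 (summable_nat_rpow.2 (hβ i)))
    fun i a => by positivity

end ElementaryBounds

section CosineSeries

lemma hasSum_pow_mul_one_sub_cos {r : ℝ} (hr : |r| < 1) (θ : ℝ) :
    HasSum (fun n : ℕ => r ^ n * (1 - cos (n * θ)))
      (r * (1 + r) * (1 - cos θ) / ((1 - r) * ((1 - r) ^ 2 + 2 * r * (1 - cos θ)))) := by
  set z : ℂ := r * Complex.exp (θ * Complex.I) with hz
  have hz_norm : ‖z‖ < 1 := by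
    simpa [hz, Complex.norm_exp_ofReal_mul_I] using hr
  have hz_re : z.re = r * cos θ := by
    rw [hz, Complex.re_ofReal_mul, Complex.exp_ofReal_mul_I_re]
  have hz_im : z.im = r * sin θ := by
    rw [hz, Complex.im_ofReal_mul, Complex.exp_ofReal_mul_I_im]
  have hz_pow (n : ℕ) : (z ^ n).re = r ^ n * cos (n * θ) := by
    rw [hz, mul_pow, ← Complex.exp_nat_mul, ← Complex.ofReal_pow, Complex.re_ofReal_mul,
      ← mul_assoc, ← Complex.ofReal_natCast, ← Complex.ofReal_mul, Complex.exp_ofReal_mul_I_re]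
  have hnormSq : Complex.normSq (1 - z) = (1 - r) ^ 2 + 2 * r * (1 - cos θ) := by
    rw [Complex.normSq_apply, Complex.sub_re, Complex.sub_im, Complex.one_re, Complex.one_im,
      hz_re, hz_im]
    linear_combination r ^ 2 * sin_sq_add_cos_sq θ
  have hdenom : (1 - r) ^ 2 + 2 * r * (1 - cos θ) ≠ 0 := by
    rw [← hnormSq, Ne, Complex.normSq_eq_zero, sub_eq_zero]
    intro h
    rw [← h, norm_one] at hz_norm
    exact hz_norm.false
  have hr1 : 1 - r ≠ 0 := by linarith [(abs_lt.1 hr).2]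
  have hsum := (hasSum_geometric_of_abs_lt_one hr).sub
    (Complex.hasSum_re (hasSum_geometric_of_norm_lt_one hz_norm))
  rw [Complex.inv_re, hnormSq, Complex.sub_re, Complex.one_re, hz_re] at hsum
  have hval : r * (1 + r) * (1 - cos θ) / ((1 - r) * ((1 - r) ^ 2 + 2 * r * (1 - cos θ))) =
      (1 - r)⁻¹ - (1 - r * cos θ) / ((1 - r) ^ 2 + 2 * r * (1 - cos θ)) := by
    rw [eq_sub_iff_add_eq, inv_eq_one_div, div_add_div _ _ (mul_ne_zero hr1 hdenom) hdenom,
      div_eq_div_iff (by positivity) hr1]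
    ring
  rw [hval]
  refine hsum.congr_fun fun n => ?_
  rw [hz_pow]
  ring

lemma sq_le_five_mul_one_sub_cos {t θ : ℝ} (ht : 0 ≤ t) (htθ : t ≤ |θ|) (hθ : |θ| ≤ π) :
    t ^ 2 ≤ 5 * (1 - cos θ) := by
  have hpi : (1 : ℝ) / 5 ≤ 2 / π ^ 2 := by
    rw [div_le_div_iff₀ (by norm_num) (by positivity)]
    nlinarith [pi_lt_d2, pi_gt_three]
  have hsq : t ^ 2 ≤ θ ^ 2 := by
    rw [← sq_abs θ]
    gcongr
  nlinarith [cos_le_one_sub_mul_cos_sq hθ, sq_nonneg θ]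

lemma inv_le_tsum_exp_mul_one_sub_cos {t θ : ℝ} (ht : 0 < t) (ht1 : t ≤ 1) (htθ : t ≤ |θ|)
    (hθ : |θ| ≤ π) :
    (21 * t)⁻¹ ≤ ∑' a : ℕ+, exp (-a * t) * (1 - cos (a * θ)) := by
  set r := exp (-t) with hr
  have hr_pos : 0 < r := exp_pos _
  have hr_lt : r < 1 := by simpa [hr] using ht
  have hsum : HasSum (fun a : ℕ+ => exp (-a * t) * (1 - cos (a * θ)))
      (r * (1 + r) * (1 - cos θ) / ((1 - r) * ((1 - r) ^ 2 + 2 * r * (1 - cos θ)))) := by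
    rw [hasSum_pnat_iff (f := fun n : ℕ => exp (-n * t) * (1 - cos (n * θ)))]
    have hpow (n : ℕ) : exp (-n * t) = r ^ n := by
      rw [hr, ← exp_nat_mul]
      ring_nf
    simpa only [hpow, Nat.cast_zero, zero_mul, cos_zero, sub_self, mul_zero, add_zero] using
      hasSum_pow_mul_one_sub_cos (abs_lt.2 ⟨by linarith, hr_lt⟩) θ
  have hcos : t ^ 2 ≤ 5 * (1 - cos θ) := sq_le_five_mul_one_sub_cos ht.le htθ hθ
  have hcos_pos : 0 < 1 - cos θ := by nlinarith
  have hr_gap : 1 - r ≤ t := by linarith [add_one_le_exp (-t)]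
  have hr_third : 1 / 3 ≤ r := by
    have : exp (-1) ≤ r := exp_le_exp.2 (by linarith)
    linarith [exp_neg_one_gt_d9]
  have hdenom : (1 - r) ^ 2 + 2 * r * (1 - cos θ) ≤ 7 * (1 - cos θ) := by nlinarith
  rw [hsum.tsum_eq]
  calc (21 * t)⁻¹ = 1 / 3 * (1 - cos θ) / (t * (7 * (1 - cos θ))) := by
        field_simp
        norm_num
    _ ≤ r * (1 + r) * (1 - cos θ) / ((1 - r) * ((1 - r) ^ 2 + 2 * r * (1 - cos θ))) := by
        have : 0 < 1 - r := sub_pos.2 hr_lt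
        gcongr
        nlinarith

end CosineSeries

section Series

/-- The summand of the multiple series `Zr`, which allows the series to be weighted termwise. -/
noncomputable def ZrTerm {ℓ : ℕ} (α : Fin ℓ → ℝ) (t : ℝ) (δ : Fin ℓ → ℕ+) : ℝ :=
  (∏ i, (δ i : ℝ) ^ (α i - 1)) * exp (-(∏ i, (δ i : ℝ)) * t)

variable {ℓ m : ℕ} {α : Fin ℓ → ℝ} {t : ℝ}

lemma Zr_eq_tsum_ZrTerm (α : Fin ℓ → ℝ) (t : ℝ) : Zr ℓ α t = ∑' δ, ZrTerm α t δ := rfl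

lemma one_le_prod_pnat (δ : Fin ℓ → ℕ+) : (1 : ℝ) ≤ ∏ i, (δ i : ℝ) := by
  exact_mod_cast Finset.prod_pos fun i _ => (δ i).pos

lemma ZrTerm_nonneg (α : Fin ℓ → ℝ) (t : ℝ) (δ : Fin ℓ → ℕ+) : 0 ≤ ZrTerm α t δ :=
  mul_nonneg (Finset.prod_nonneg fun i _ => by positivity) (exp_pos _).le

lemma ZrTerm_add_le (α : Fin ℓ → ℝ) (t : ℝ) {h : ℝ} (hh : 0 ≤ h) (δ : Fin ℓ → ℕ+) :
    ZrTerm α (t + h) δ ≤ exp (-h) * ZrTerm α t δ := by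
  have hexp : exp (-(∏ i, (δ i : ℝ)) * (t + h)) ≤ exp (-h) * exp (-(∏ i, (δ i : ℝ)) * t) := by
    rw [← exp_add, exp_le_exp]
    nlinarith [one_le_prod_pnat δ]
  have hweight : 0 ≤ ∏ i, (δ i : ℝ) ^ (α i - 1) := Finset.prod_nonneg fun i _ => by positivity
  calc ZrTerm α (t + h) δ
      ≤ (∏ i, (δ i : ℝ) ^ (α i - 1)) * (exp (-h) * exp (-(∏ i, (δ i : ℝ)) * t)) :=
        mul_le_mul_of_nonneg_left hexp hweight
    _ = exp (-h) * ZrTerm α t δ := by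
        rw [ZrTerm]
        ring

lemma ZrTerm_le_of_le (α : Fin ℓ → ℝ) {t w : ℝ} (htw : t ≤ w) (δ : Fin ℓ → ℕ+) :
    ZrTerm α w δ ≤ ZrTerm α t δ := by
  have hadd := ZrTerm_add_le α t (sub_nonneg.2 htw) δ
  rw [add_sub_cancel] at hadd
  exact hadd.trans (mul_le_of_le_one_left (ZrTerm_nonneg α t δ) (exp_le_one_iff.2 (by linarith)))

lemma ZrTerm_le_mul_prod_rpow {p : ℝ} (α : Fin ℓ → ℝ) (hp : 0 ≤ p) (ht : 0 < t)
    (δ : Fin ℓ → ℕ+) :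
    ZrTerm α t δ ≤ p ^ p * t ^ (-p) * ∏ i, (δ i : ℝ) ^ (α i - 1 - p) := by
  have hprod : 0 < ∏ i, (δ i : ℝ) := one_pos.trans_le (one_le_prod_pnat δ)
  calc ZrTerm α t δ
      ≤ (∏ i, (δ i : ℝ) ^ (α i - 1)) * (p ^ p * ((∏ i, (δ i : ℝ)) * t) ^ (-p)) := by
        rw [ZrTerm, neg_mul]
        gcongr
        exact exp_neg_le_rpow_neg hp (by positivity)
    _ = p ^ p * t ^ (-p) * ((∏ i, (δ i : ℝ) ^ (α i - 1)) * ∏ i, (δ i : ℝ) ^ (-p)) := by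
        rw [mul_rpow hprod.le ht.le, finsetProd_rpow _ _ fun i _ => by positivity]
        ring
    _ = p ^ p * t ^ (-p) * ∏ i, (δ i : ℝ) ^ (α i - 1 - p) := by
        rw [← Finset.prod_mul_distrib]
        congr! 2 with i
        rw [← rpow_add (by exact_mod_cast (δ i).pos), sub_eq_add_neg (α i - 1)]

lemma summable_ZrTerm (α : Fin ℓ → ℝ) (ht : 0 < t) : Summable (ZrTerm α t) := by
  obtain ⟨B, hB⟩ := (Set.finite_range α).bddAbove
  set p := max B 0 + 1
  have hαp (i : Fin ℓ) : α i - 1 - p < -1 := by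
    linarith [hB (Set.mem_range_self i), le_max_left B 0]
  exact Summable.of_nonneg_of_le (ZrTerm_nonneg α t)
    (ZrTerm_le_mul_prod_rpow α (by positivity) ht) ((summable_pnat_prod_rpow hαp).mul_left _)

lemma continuousOn_Zr (α : Fin ℓ → ℝ) : ContinuousOn (Zr ℓ α) (Set.Ioi 0) := by
  intro t (ht : 0 < t)
  have hIci : ContinuousOn (Zr ℓ α) (Set.Ici (t / 2)) := by
    refine continuousOn_tsum (u := ZrTerm α (t / 2)) (fun δ => by fun_prop)
      (summable_ZrTerm α (half_pos ht)) fun δ w hw => ?_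
    change ‖ZrTerm α w δ‖ ≤ _
    rw [norm_of_nonneg (ZrTerm_nonneg α w δ)]
    exact ZrTerm_le_of_le α hw δ
  exact (hIci.continuousAt (Ici_mem_nhds (half_lt_self ht))).continuousWithinAt

lemma Zr_le_exp_mul_Zr_one (α : Fin ℓ → ℝ) (ht : 1 ≤ t) :
    Zr ℓ α t ≤ exp (-(t - 1)) * Zr ℓ α 1 := by
  simp only [Zr_eq_tsum_ZrTerm, ← tsum_mul_left]
  refine (summable_ZrTerm α (one_pos.trans_le ht)).tsum_le_tsum (fun δ => ?_)
    ((summable_ZrTerm α one_pos).mul_left _)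
  simpa using ZrTerm_add_le α 1 (sub_nonneg.2 ht) δ

lemma tendsto_Zr_atTop (α : Fin ℓ → ℝ) : Tendsto (Zr ℓ α) atTop (𝓝 0) := by
  have hexp : Tendsto (fun t => exp (-(t - 1)) * Zr ℓ α 1) atTop (𝓝 0) := by
    have hshift : Tendsto (fun t : ℝ => t - 1) atTop atTop :=
      tendsto_atTop_add_const_right atTop (-1) tendsto_id
    simpa using (tendsto_exp_neg_atTop_nhds_zero.comp hshift).mul_const (Zr ℓ α 1)
  exact squeeze_zero' (Eventually.of_forall fun t => tsum_nonneg (ZrTerm_nonneg α t))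
    ((eventually_ge_atTop 1).mono fun t ht => Zr_le_exp_mul_Zr_one α ht) hexp

lemma prod_mulSingle_rpow (i : Fin ℓ) (a : ℕ+) (β : Fin ℓ → ℝ) :
    ∏ j, ((Pi.mulSingle i a : Fin ℓ → ℕ+) j : ℝ) ^ β j = (a : ℝ) ^ β i := by
  rw [Fintype.prod_eq_single i fun j hj => by simp [Pi.mulSingle_eq_of_ne hj],
    Pi.mulSingle_eq_same]

lemma prod_mulSingle_pnat (i : Fin ℓ) (a : ℕ+) :
    ∏ j, ((Pi.mulSingle i a : Fin ℓ → ℕ+) j : ℝ) = a := by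
  simpa using prod_mulSingle_rpow i a fun _ => 1

lemma tsum_exp_mul_le_tsum_ZrTerm_mul {i : Fin ℓ} (hi : 1 ≤ α i) {f : ℝ → ℝ}
    (hf0 : ∀ v, 0 ≤ f v) (hf : Summable fun δ => ZrTerm α t δ * f (∏ j, (δ j : ℝ))) :
    ∑' a : ℕ+, exp (-a * t) * f a ≤ ∑' δ, ZrTerm α t δ * f (∏ j, (δ j : ℝ)) := by
  have hinj : Function.Injective fun a : ℕ+ => (Pi.mulSingle i a : Fin ℓ → ℕ+) :=
    Pi.mulSingle_injective (M := fun _ => ℕ+) i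
  have hterm (a : ℕ+) : exp (-a * t) * f a ≤
      ZrTerm α t (Pi.mulSingle i a) * f (∏ j, ((Pi.mulSingle i a : Fin ℓ → ℕ+) j : ℝ)) := by
    rw [ZrTerm, prod_mulSingle_rpow i a fun j => α j - 1, prod_mulSingle_pnat]
    have hweight : (1 : ℝ) ≤ (a : ℝ) ^ (α i - 1) :=
      one_le_rpow (by exact_mod_cast a.pos) (sub_nonneg.2 hi)
    exact mul_le_mul_of_nonneg_right (le_mul_of_one_le_left (exp_pos _).le hweight) (hf0 a)
  have hsum := hf.comp_injective hinj
  calc ∑' a : ℕ+, exp (-a * t) * f a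
      ≤ ∑' a : ℕ+, ZrTerm α t (Pi.mulSingle i a) *
          f (∏ j, ((Pi.mulSingle i a : Fin ℓ → ℕ+) j : ℝ)) :=
        (Summable.of_nonneg_of_le (fun a : ℕ+ => mul_nonneg (exp_pos _).le (hf0 a)) hterm
          hsum).tsum_le_tsum hterm hsum
    _ ≤ ∑' δ, ZrTerm α t δ * f (∏ j, (δ j : ℝ)) :=
        tsum_comp_le_tsum_of_inj hf (fun δ => mul_nonneg (ZrTerm_nonneg α t δ) (hf0 _)) hinj

lemma inv_exp_sub_one_le_Zr {i : Fin ℓ} (hi : 1 ≤ α i) (ht : 0 < t) :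
    (exp t - 1)⁻¹ ≤ Zr ℓ α t := by
  have hle := tsum_exp_mul_le_tsum_ZrTerm_mul (t := t) hi (f := fun _ => 1)
    (fun _ => zero_le_one) (by simpa using summable_ZrTerm α ht)
  simp only [mul_one, (hasSum_pnat_exp_neg_mul ht).tsum_eq] at hle
  exact hle

lemma tendsto_Zr_nhdsGT_zero {i : Fin ℓ} (hi : 1 ≤ α i) :
    Tendsto (Zr ℓ α) (𝓝[>] 0) atTop := by
  have hexp : Tendsto (fun t => exp t - 1) (𝓝[>] 0) (𝓝[>] 0) := by
    refine tendsto_nhdsWithin_iff.2 ⟨?_, ?_⟩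
    · have hcont : Continuous fun t => exp t - 1 := by fun_prop
      simpa using (hcont.tendsto 0).mono_left nhdsWithin_le_nhds
    · filter_upwards [self_mem_nhdsWithin] with t (ht : 0 < t)
      simpa using ht
  refine tendsto_atTop_mono' _ ?_ (tendsto_inv_nhdsGT_zero.comp hexp)
  filter_upwards [self_mem_nhdsWithin] with t ht using inv_exp_sub_one_le_Zr hi ht

lemma surjOn_Zr {i : Fin ℓ} (hi : 1 ≤ α i) : Set.SurjOn (Zr ℓ α) (Set.Ioi 0) (Set.Ioi 0) :=
  isPreconnected_Ioi.intermediate_value_Ioi (le_principal_iff.2 (Ioi_mem_atTop 0))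
    (le_principal_iff.2 self_mem_nhdsWithin) (continuousOn_Zr α) (tendsto_Zr_atTop α)
    (tendsto_Zr_nhdsGT_zero hi)

lemma ZrTerm_insertNth (α : Fin (m + 1) → ℝ) (t : ℝ) (p : Fin (m + 1)) (a : ℕ+)
    (δ : Fin m → ℕ+) :
    ZrTerm α t (p.insertNth a δ) = (∏ j, (δ j : ℝ) ^ (α (p.succAbove j) - 1)) *
      ((a : ℝ) ^ (α p - 1) * exp (-a * ((∏ j, (δ j : ℝ)) * t))) := by
  simp only [ZrTerm, Fin.prod_univ_succAbove _ p, Fin.insertNth_apply_same,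
    Fin.insertNth_apply_succAbove]
  ring_nf

lemma tsum_ZrTerm_insertNth_le (α : Fin (m + 1) → ℝ) {p : Fin (m + 1)} (hp : 1 ≤ α p)
    (ht : 0 < t) (δ : Fin m → ℕ+) :
    ∑' a : ℕ+, ZrTerm α t (p.insertNth a δ) ≤
      (α p - 1) ^ (α p - 1) * (2 / t) ^ α p *
        ∏ j, (δ j : ℝ) ^ (α (p.succAbove j) - 1 - α p) := by
  have hprod : 0 < ∏ j, (δ j : ℝ) := one_pos.trans_le (one_le_prod_pnat δ)
  have hinner := tsum_pnat_rpow_mul_exp_neg_le (sub_nonneg.2 hp) (mul_pos hprod ht)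
  rw [sub_add_cancel] at hinner
  have hscale : (2 / ((∏ j, (δ j : ℝ)) * t)) ^ α p =
      (2 / t) ^ α p * ∏ j, (δ j : ℝ) ^ (-α p) := by
    rw [finsetProd_rpow _ _ fun j _ => by positivity, rpow_neg hprod.le,
      ← inv_rpow hprod.le, ← mul_rpow (by positivity) (by positivity)]
    field_simp
  simp only [ZrTerm_insertNth, tsum_mul_left]
  calc _ ≤ (∏ j, (δ j : ℝ) ^ (α (p.succAbove j) - 1)) *
        ((α p - 1) ^ (α p - 1) * (2 / ((∏ j, (δ j : ℝ)) * t)) ^ α p) := by gcongr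
    _ = (α p - 1) ^ (α p - 1) * (2 / t) ^ α p *
        ∏ j, (δ j : ℝ) ^ (α (p.succAbove j) - 1) * (δ j : ℝ) ^ (-α p) := by
        rw [hscale, Finset.prod_mul_distrib]
        ring
    _ = _ := by
        congr! 2 with j
        rw [← rpow_add (by exact_mod_cast (δ j).pos), ← sub_eq_add_neg]

lemma exists_Zr_le_mul_rpow_neg {α : Fin (m + 1) → ℝ} {p : Fin (m + 1)} (hp : 1 ≤ α p)
    (hlt : ∀ j, α (p.succAbove j) < α p) :
    ∃ C, ∀ t > 0, Zr (m + 1) α t ≤ C * t ^ (-α p) := by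
  have houter : Summable fun δ : Fin m → ℕ+ => ∏ j, (δ j : ℝ) ^ (α (p.succAbove j) - 1 - α p) :=
    summable_pnat_prod_rpow fun j => by linarith [hlt j]
  refine ⟨(α p - 1) ^ (α p - 1) * 2 ^ α p *
    ∑' δ : Fin m → ℕ+, ∏ j, (δ j : ℝ) ^ (α (p.succAbove j) - 1 - α p), fun t ht => ?_⟩
  let split : (Fin m → ℕ+) × ℕ+ ≃ (Fin (m + 1) → ℕ+) :=
    (Equiv.prodComm _ _).trans (Fin.insertNthEquiv (fun _ => ℕ+) p)
  have hsum : Summable fun c => ZrTerm α t (split c) :=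
    split.summable_iff.2 (summable_ZrTerm α ht)
  calc Zr (m + 1) α t = ∑' δ : Fin m → ℕ+, ∑' a : ℕ+, ZrTerm α t (p.insertNth a δ) := by
        rw [Zr_eq_tsum_ZrTerm, ← split.tsum_eq, hsum.tsum_prod]
        rfl
    _ ≤ ∑' δ : Fin m → ℕ+, (α p - 1) ^ (α p - 1) * (2 / t) ^ α p *
          ∏ j, (δ j : ℝ) ^ (α (p.succAbove j) - 1 - α p) :=
        hsum.prod.tsum_le_tsum (tsum_ZrTerm_insertNth_le α hp ht) (houter.mul_left _)
    _ = _ := by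
        rw [tsum_mul_left, div_rpow two_pos.le ht.le, rpow_neg ht.le]
        ring

end Series

section Staircase

/-- The exponents `(m, m - 1, …, m - ℓ + 1)` of the staircase series `Zstair ℓ m`. -/
def staircase (ℓ : ℕ) (m : ℤ) : Fin ℓ → ℝ := fun i => m - (i : ℕ)

variable {ℓ : ℕ}

lemma exists_Zstair_self_mul_pow_le (hℓ : 1 ≤ ℓ) : ∃ C, ∀ t > 0, Zstair ℓ ℓ t * t ^ ℓ ≤ C := by
  obtain ⟨m, rfl⟩ := Nat.exists_eq_add_of_le' hℓ
  have hzero : staircase (m + 1) (m + 1 : ℕ) 0 = (m + 1 : ℕ) := by simp [staircase]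
  obtain ⟨C, hC⟩ := exists_Zr_le_mul_rpow_neg (α := staircase (m + 1) (m + 1 : ℕ)) (p := 0)
    (by rw [hzero]; exact_mod_cast hℓ) fun j => by
      simp only [staircase, Fin.zero_succAbove, Fin.val_succ, Fin.val_zero]
      push_cast
      linarith [(j : ℕ).cast_nonneg (α := ℝ)]
  refine ⟨C, fun t ht => ?_⟩
  have hle := hC t ht
  rw [hzero, rpow_neg ht.le, rpow_natCast, ← div_eq_mul_inv, le_div_iff₀ (by positivity)] at hle
  exact hle

lemma surjOn_Zstair {m : ℤ} (hℓ : 1 ≤ ℓ) (hm : 1 ≤ m) :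
    Set.SurjOn (Zstair ℓ m) (Set.Ioi 0) (Set.Ioi 0) :=
  surjOn_Zr (i := ⟨0, hℓ⟩) (by simpa [staircase] using mod_cast hm)

lemma ofReal_ZrTerm_staircase (m : ℤ) (u : ℝ) (δ : Fin ℓ → ℕ+) :
    (ZrTerm (staircase ℓ m) u δ : ℂ) =
      (∏ i, ((δ i : ℕ) : ℂ) ^ (m - 1 - (i : ℕ))) *
        Complex.exp (-(((∏ i, (δ i : ℝ)) * u : ℝ) : ℂ)) := by
  have hweight (i : Fin ℓ) :
      (δ i : ℝ) ^ (staircase ℓ m i - 1) = (δ i : ℝ) ^ (m - 1 - (i : ℕ) : ℤ) := by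
    rw [← rpow_intCast, staircase]
    push_cast
    ring_nf
  simp only [ZrTerm, hweight]
  push_cast
  ring_nf

end Staircase

section RealPart

variable {ℓ : ℕ} {u : ℝ}

lemma summable_ZrTerm_mul_cexp_sub_one (α : Fin ℓ → ℝ) (hu : 0 < u) (θ : ℝ) :
    Summable fun δ => (ZrTerm α u δ : ℂ) *
      (Complex.exp (Complex.I * (((∏ i, (δ i : ℝ)) * θ : ℝ) : ℂ)) - 1) := by
  refine Summable.of_norm_bounded ((summable_ZrTerm α hu).mul_right 2) fun δ => ?_
  rw [norm_mul, Complex.norm_real, norm_of_nonneg (ZrTerm_nonneg α u δ)]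
  refine mul_le_mul_of_nonneg_left ?_ (ZrTerm_nonneg α u δ)
  refine (norm_sub_le _ _).trans ?_
  rw [mul_comm, Complex.norm_exp_ofReal_mul_I, norm_one]
  norm_num

lemma re_ZrTerm_mul_cexp_sub_one (α : Fin ℓ → ℝ) (u θ : ℝ) (δ : Fin ℓ → ℕ+) :
    ((ZrTerm α u δ : ℂ) *
      (Complex.exp (Complex.I * (((∏ i, (δ i : ℝ)) * θ : ℝ) : ℂ)) - 1)).re =
      -(ZrTerm α u δ * (1 - cos ((∏ i, (δ i : ℝ)) * θ))) := by
  rw [Complex.re_ofReal_mul, Complex.sub_re, mul_comm Complex.I, Complex.exp_ofReal_mul_I_re,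
    Complex.one_re]
  ring

lemma re_qfun (n : ℕ) (y : ℝ) (hu : 0 < u) (θ : ℝ) :
    (qfun ℓ n y u θ).re =
      y * ∑' δ, ZrTerm (staircase ℓ (ℓ - 1)) u δ * (1 - cos ((∏ i, (δ i : ℝ)) * θ)) := by
  have hq : qfun ℓ n y u θ = Complex.I * n * θ - y * ∑' δ,
      (ZrTerm (staircase ℓ (ℓ - 1)) u δ : ℂ) *
        (Complex.exp (Complex.I * (((∏ i, (δ i : ℝ)) * θ : ℝ) : ℂ)) - 1) := by
    simp only [ofReal_ZrTerm_staircase, sub_sub (ℓ : ℤ) 1 1, one_add_one_eq_two]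
    rfl
  rw [hq, Complex.sub_re, Complex.re_ofReal_mul,
    Complex.re_tsum (summable_ZrTerm_mul_cexp_sub_one _ hu θ)]
  simp only [re_ZrTerm_mul_cexp_sub_one, tsum_neg]
  simp

lemma summable_ZrTerm_mul_one_sub_cos (α : Fin ℓ → ℝ) (hu : 0 < u) (θ : ℝ) :
    Summable fun δ => ZrTerm α u δ * (1 - cos ((∏ i, (δ i : ℝ)) * θ)) := by
  have hre := (Complex.hasSum_re (summable_ZrTerm_mul_cexp_sub_one α hu θ).hasSum).summable.neg
  simpa only [re_ZrTerm_mul_cexp_sub_one, neg_neg] using hre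

lemma mul_inv_le_re_qfun (hℓ : 2 ≤ ℓ) (n : ℕ) {y θ : ℝ} (hy : 0 ≤ y) (hu : 0 < u) (hu1 : u ≤ 1)
    (huθ : u ≤ |θ|) (hθ : |θ| ≤ π) : y * (21 * u)⁻¹ ≤ (qfun ℓ n y u θ).re := by
  have hfirst : 1 ≤ staircase ℓ (ℓ - 1) ⟨0, by lia⟩ := by
    have : (2 : ℝ) ≤ ℓ := by exact_mod_cast hℓ
    simp only [staircase]
    push_cast
    linarith
  rw [re_qfun n y hu θ]
  gcongr
  calc (21 * u)⁻¹ ≤ ∑' a : ℕ+, exp (-a * u) * (1 - cos (a * θ)) :=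
        inv_le_tsum_exp_mul_one_sub_cos hu hu1 huθ hθ
    _ ≤ _ := tsum_exp_mul_le_tsum_ZrTerm_mul (f := fun v => 1 - cos (v * θ)) hfirst
        (fun v => sub_nonneg.2 (cos_le_one _)) (summable_ZrTerm_mul_one_sub_cos _ hu θ)

end RealPart

section Sequences

variable {ℓ n : ℕ} {x : ℝ}

lemma exists_pos_Zstair_eq_div (hℓ : 1 ≤ ℓ) (hx : 0 < x) (hn : 0 < n) :
    ∃ t ∈ Set.Ioi 0, Zstair ℓ ℓ t = n / x :=
  surjOn_Zstair hℓ (by exact_mod_cast hℓ) (Set.mem_Ioi.2 (by positivity))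

lemma tseq_pos (hℓ : 1 ≤ ℓ) (hx : 0 < x) (hn : 0 < n) : 0 < tseq ℓ x n :=
  Function.invFunOn_mem (exists_pos_Zstair_eq_div hℓ hx hn)

lemma Zstair_tseq (hℓ : 1 ≤ ℓ) (hx : 0 < x) (hn : 0 < n) : Zstair ℓ ℓ (tseq ℓ x n) = n / x :=
  Function.invFunOn_eq (exists_pos_Zstair_eq_div hℓ hx hn)

lemma exists_rpow_le_div_tseq (hℓ : 1 ≤ ℓ) (hx : 0 < x) :
    ∃ D > 0, ∀ n : ℕ, 0 < n → (n : ℝ) ^ ((1 : ℝ) / ℓ) ≤ D / tseq ℓ x n := by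
  obtain ⟨C, hC⟩ := exists_Zstair_self_mul_pow_le hℓ
  have hℓ0 : ℓ ≠ 0 := by lia
  refine ⟨max 1 (C * x), by positivity, fun n hn => ?_⟩
  have ht := tseq_pos hℓ hx hn
  have hCn := hC _ ht
  rw [Zstair_tseq hℓ hx hn, div_mul_eq_mul_div, div_le_iff₀ hx] at hCn
  rw [le_div_iff₀ ht, ← pow_le_pow_iff_left₀ (by positivity) (by positivity) hℓ0]
  calc ((n : ℝ) ^ ((1 : ℝ) / ℓ) * tseq ℓ x n) ^ ℓ = n * tseq ℓ x n ^ ℓ := by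
        rw [mul_pow, one_div, rpow_inv_natCast_pow (by positivity) hℓ0]
    _ ≤ max 1 (C * x) := hCn.trans (le_max_right _ _)
    _ ≤ max 1 (C * x) ^ ℓ := le_self_pow₀ (le_max_left _ _) hℓ0

lemma tendsto_tseq (hℓ : 1 ≤ ℓ) (hx : 0 < x) : Tendsto (tseq ℓ x) atTop (𝓝 0) := by
  obtain ⟨D, -, hD⟩ := exists_rpow_le_div_tseq hℓ hx
  have hpow : Tendsto (fun n : ℕ => (n : ℝ) ^ ((1 : ℝ) / ℓ)) atTop atTop :=
    (tendsto_rpow_atTop (by positivity)).comp tendsto_natCast_atTop_atTop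
  have hbound : Tendsto (fun n : ℕ => D / (n : ℝ) ^ ((1 : ℝ) / ℓ)) atTop (𝓝 0) :=
    tendsto_const_nhds.div_atTop hpow
  refine squeeze_zero' ?_ ?_ hbound
  · filter_upwards [eventually_gt_atTop 0] with n hn using (tseq_pos hℓ hx hn).le
  · filter_upwards [eventually_gt_atTop 0] with n hn
    exact (le_div_comm₀ (by positivity) (tseq_pos hℓ hx hn)).1 (hD n hn)

lemma tendsto_xseq (hℓ : 2 ≤ ℓ) (x s : ℝ) : Tendsto (xseq ℓ x s) atTop (𝓝 x) := by
  have hexponent : 0 < ((ℓ : ℝ) - 1) / (2 * ℓ) := by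
    have : (2 : ℝ) ≤ ℓ := by exact_mod_cast hℓ
    apply div_pos <;> linarith
  have hpow : Tendsto (fun n : ℕ => (n : ℝ) ^ (((ℓ : ℝ) - 1) / (2 * ℓ))) atTop atTop :=
    (tendsto_rpow_atTop hexponent).comp tendsto_natCast_atTop_atTop
  have hratio : Tendsto (fun n => s / bseq ℓ x n) atTop (𝓝 0) := by
    simp only [bseq, ← div_div s]
    exact tendsto_const_nhds.div_atTop hpow
  have hlim := hratio.rexp.const_mul x
  rw [exp_zero, mul_one] at hlim
  exact hlim

end Sequences

lemma norm_integral_cexp_neg_le {f : ℝ → ℂ} {S : Set ℝ} {c : ℝ} (hS : S ⊆ Set.Ioo (-π) π)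
    (hf : ∀ θ ∈ S, c ≤ (f θ).re) :
    ‖((1 / (2 * π) : ℝ) : ℂ) * ∫ θ in S, Complex.exp (-f θ)‖ ≤ exp (-c) := by
  have hfin : volume (Set.Ioo (-π) π) < ⊤ := measure_Ioo_lt_top
  have hvol : volume.real S ≤ 2 * π := by
    refine (measureReal_mono hS hfin.ne).trans_eq ?_
    rw [volume_real_Ioo_of_le (by linarith [pi_pos])]
    ring
  have hint : ‖∫ θ in S, Complex.exp (-f θ)‖ ≤ exp (-c) * volume.real S :=
    norm_setIntegral_le_of_norm_le_const ((measure_mono hS).trans_lt hfin) fun θ hθ => by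
      rw [Complex.norm_exp, Complex.neg_re]
      exact exp_le_exp.2 (neg_le_neg (hf θ hθ))
  rw [norm_mul, Complex.norm_real, norm_of_nonneg (by positivity)]
  calc 1 / (2 * π) * ‖∫ θ in S, Complex.exp (-f θ)‖ ≤ 1 / (2 * π) * (exp (-c) * (2 * π)) := by
        gcongr
        exact hint.trans (by gcongr)
    _ = exp (-c) := by field_simp

/-- minor arc estimate. There is `η > 0` such that for all sufficiently large
`n` (in particular `t_n < π`) and all `t_n < |θ| < π`, `Re q_{ℓ,n}(x_n,t_n,θ) ≥ η n^{1/ℓ}`;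
consequently the minor arc integral is at most `exp(-η n^{1/ℓ})` in modulus. -/
theorem minor_arc_bound (ℓ : ℕ) (hℓ : 2 ≤ ℓ) (x s : ℝ) (hx : 0 < x) :
    ∃ η > (0 : ℝ), ∀ᶠ n : ℕ in atTop,
      tseq ℓ x n < π ∧
      (∀ θ : ℝ, tseq ℓ x n < |θ| → |θ| < π →
        η * (n : ℝ) ^ ((1 : ℝ) / (ℓ : ℝ)) ≤
          (qfun ℓ n (xseq ℓ x s n) (tseq ℓ x n) θ).re) ∧
      ‖((1 / (2 * π) : ℝ) : ℂ) *
          ∫ θ in {θ : ℝ | tseq ℓ x n < |θ| ∧ |θ| < π},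
            Complex.exp (-qfun ℓ n (xseq ℓ x s n) (tseq ℓ x n) θ)‖ ≤
        Real.exp (-η * (n : ℝ) ^ ((1 : ℝ) / (ℓ : ℝ))) := by
  have hℓ1 : 1 ≤ ℓ := by lia
  obtain ⟨D, hD, hDn⟩ := exists_rpow_le_div_tseq hℓ1 hx
  refine ⟨x / (42 * D), by positivity, ?_⟩
  filter_upwards [(tendsto_xseq hℓ x s).eventually (lt_mem_nhds (half_lt_self hx)),
    (tendsto_tseq hℓ1 hx).eventually (gt_mem_nhds one_pos), eventually_gt_atTop 0]
    with n hxn htn hn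
  have ht := tseq_pos hℓ1 hx hn
  have hre (θ : ℝ) (htθ : tseq ℓ x n < |θ|) (hθ : |θ| < π) :
      x / (42 * D) * (n : ℝ) ^ ((1 : ℝ) / (ℓ : ℝ)) ≤
        (qfun ℓ n (xseq ℓ x s n) (tseq ℓ x n) θ).re :=
    calc x / (42 * D) * (n : ℝ) ^ ((1 : ℝ) / (ℓ : ℝ))
        ≤ x / (42 * D) * (D / tseq ℓ x n) := by
          gcongr
          exact hDn n hn
      _ = x / 2 * (21 * tseq ℓ x n)⁻¹ := by
          field_simp
          norm_num
      _ ≤ xseq ℓ x s n * (21 * tseq ℓ x n)⁻¹ := by gcongr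
      _ ≤ _ := mul_inv_le_re_qfun hℓ n (by linarith) ht htn.le htθ.le hθ.le
  refine ⟨by linarith [pi_gt_three], hre, ?_⟩
  rw [neg_mul]
  exact norm_integral_cexp_neg_le (fun θ hθ => abs_lt.1 hθ.2) fun θ hθ => hre θ hθ.1 hθ.2
end
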